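/- arXiv:1310.5938 — 2 statements merged into one kernel-verified Lean document; each statement's English description precedes it below -/
import Mathlib

section
/- For every integer n ≥ 1, the double series defining the subelliptic heat kernel h_t(r,φ) on CP^{2n+1} converges absolutely for every t > 0, r ∈ [0, π/2), φ ∈ [0, π/2], and the resulting function satisfies the subelliptic heat equation ∂h/∂t = ∂²h/∂r² + ((4n−1)·cot r − 3·tan r)·∂h/∂r + tan²r·(∂²h/∂φ² + 2·cot 2φ·∂h/∂φ) at every point (t, r, φ) ∈ (0,∞) × (0, π/2) × (0, π/2). -/
open Real MeasureTheory Filter Topology Set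

noncomputable section

/-- The defining formula of the Jacobi polynomial `P_k^{(α,β)}` on `(-1,1)`. -/
def jacobiFormula (k α β : ℕ) (x : ℝ) : ℝ :=
  ((-1 : ℝ) ^ k / (2 ^ k * Nat.factorial k)) * (1 - x) ^ (-(α : ℤ)) * (1 + x) ^ (-(β : ℤ)) *
    iteratedDeriv k (fun y => (1 - y) ^ (α + k) * (1 + y) ^ (β + k)) x

/-- `J k α β` is the Jacobi polynomial `P_k^{(α,β)}`: a polynomial function satisfying the
defining formula on `(-1,1)`. -/
def IsJacobi (J : ℕ → ℕ → ℕ → ℝ → ℝ) : Prop :=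
  ∀ k α β : ℕ, (∃ p : Polynomial ℝ, ∀ x : ℝ, J k α β x = p.eval x) ∧
    ∀ x ∈ Set.Ioo (-1 : ℝ) 1, J k α β x = jacobiFormula k α β x

/-- The vertical factor `sin((m+1)η)/sin η`, extended by its limit `m+1` at `η = 0`. -/
def vertFactor (m : ℕ) (η : ℝ) : ℝ :=
  if η = 0 then (m + 1 : ℝ) else Real.sin ((m + 1) * η) / Real.sin η

/-- The general term of the double series defining the subelliptic heat kernel of the
quaternionic Hopf fibration on `S^{4n+3}`. -/
def pTerm (n : ℕ) (J : ℕ → ℕ → ℕ → ℝ → ℝ) (t r η : ℝ) (mk : ℕ × ℕ) : ℝ :=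
  (Real.Gamma (2 * n) / (2 * Real.pi ^ (2 * n + 2))) *
    (2 * (mk.2 : ℝ) + mk.1 + 2 * n + 1) * ((mk.1 : ℝ) + 1) *
    (Nat.choose (mk.2 + mk.1 + 2 * n) (2 * n - 1) : ℝ) *
    Real.exp (-(4 * ((mk.2 : ℝ) * (mk.2 + 2 * n + mk.1 + 1) + n * mk.1)) * t) *
    vertFactor mk.1 η * Real.cos r ^ mk.1 * J mk.2 (2 * n - 1) (mk.1 + 1) (Real.cos (2 * r))

/-- The subelliptic heat kernel of the quaternionic Hopf fibration on `S^{4n+3}`. -/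
def pKernel (n : ℕ) (J : ℕ → ℕ → ℕ → ℝ → ℝ) (t r η : ℝ) : ℝ :=
  ∑' mk : ℕ × ℕ, pTerm n J t r η mk

/-- The defining formula of the Gegenbauer polynomial `C_m^{2n+1}` on `(-1,1)`. -/
def gegenbauerFormula (n m : ℕ) (x : ℝ) : ℝ :=
  ((-1 : ℝ) ^ m / 2 ^ m) *
    (Real.Gamma ((m : ℝ) + 4 * n + 2) * Real.Gamma (2 * (n : ℝ) + 3 / 2) /
      (Real.Gamma (4 * (n : ℝ) + 2) * Real.Gamma ((m : ℝ) + 1) *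
        Real.Gamma (2 * (n : ℝ) + m + 3 / 2))) *
    (1 - x ^ 2) ^ (-(2 * (n : ℝ) + 1 / 2)) *
    iteratedDeriv m (fun y => (1 - y ^ 2) ^ (2 * (n : ℝ) + m + 1 / 2)) x

/-- `C m` is the Gegenbauer polynomial `C_m^{2n+1}`. -/
def IsGegenbauer (n : ℕ) (C : ℕ → ℝ → ℝ) : Prop :=
  ∀ m : ℕ, (∃ p : Polynomial ℝ, ∀ x : ℝ, C m x = p.eval x) ∧
    ∀ x ∈ Set.Ioo (-1 : ℝ) 1, C m x = gegenbauerFormula n m x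

/-- The Riemannian heat kernel of `S^{4n+3}`. -/
def qKernel (n : ℕ) (C : ℕ → ℝ → ℝ) (t x : ℝ) : ℝ :=
  (Real.Gamma (2 * n + 1) / (2 * Real.pi ^ (2 * n + 2))) *
    ∑' m : ℕ, ((m : ℝ) + 2 * n + 1) * Real.exp (-((m : ℝ) * (m + 4 * n + 2)) * t) * C m x

/-- The general term of the double series defining the subelliptic heat kernel on `CP^{2n+1}`. -/
def hTerm (n : ℕ) (J : ℕ → ℕ → ℕ → ℝ → ℝ) (t r φ : ℝ) (mk : ℕ × ℕ) : ℝ :=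
  (Real.Gamma (2 * n) / (4 * Real.pi ^ (2 * n + 2))) *
    (2 * (mk.2 : ℝ) + 2 * mk.1 + 2 * n + 1) * (2 * (mk.1 : ℝ) + 1) *
    (Nat.choose (mk.2 + 2 * mk.1 + 2 * n) (2 * n - 1) : ℝ) *
    Real.exp (-(4 * (mk.2 : ℝ) * (mk.2 + 2 * n + 2 * mk.1 + 1) + 8 * n * mk.1) * t) *
    Real.cos r ^ (2 * mk.1) * J mk.1 0 0 (Real.cos (2 * φ)) *
    J mk.2 (2 * n - 1) (2 * mk.1 + 1) (Real.cos (2 * r))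

/-- The subelliptic heat kernel of the fibration `CP^1 → CP^{2n+1} → HP^n`. -/
def hKernel (n : ℕ) (J : ℕ → ℕ → ℕ → ℝ → ℝ) (t r φ : ℝ) : ℝ :=
  ∑' mk : ℕ × ℕ, hTerm n J t r φ mk

end

/-!
Written as an identity of polynomials, Rodrigues' formula yields Jacobi's differential equation and
the values `C(α + k, k)` and `± C(β + k, k)` of `P_k^{(α,β)}` at `1` and `-1`. Sonin's energy
`k (k + α + β + 1) P² + (1 - x²) P'²` attains its maximum over `[-1, 1]` at an endpoint, so the
larger of these two binomial coefficients bounds `P` and, up to a polynomial factor, the derivative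
of `θ ↦ P (cos 2θ)`.

In the variable `x = cos 2r` Jacobi's equation has drift `(2α + 1) cot r - (2β + 1) tan r`, and
multiplication by `cos r ^ (2m)` lowers `β = 2m + 1` to `1` at the price of the potential
`4 m (m + 1) tan² r`. This is exactly what the fibre operator produces on `P_m (cos 2φ)`, so every
term of the series solves the heat equation.

With `N = k + 2m + 2n + 1`, the `(m, k)` term and its derivatives are bounded by a power of `N`
times `N ^ k exp (-(4 k N + 8 n m) t)`, which is summable for every `t > 0`; the series may
therefore be differentiated term by term.
-/

open Polynomial

section JacobiPolynomials

open scoped Nat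

variable {R : Type*} [CommRing R]

variable (R) in
/-- The Jacobi weight `(1 - x) ^ α * (1 + x) ^ β` with natural exponents, as a polynomial. -/
noncomputable def jacobiWeight (α β : ℕ) : R[X] :=
  (1 - X) ^ α * (1 + X) ^ β

/-- `p` is the Jacobi polynomial `P_k^{(α,β)}`: Rodrigues' formula, multiplied out so that it is an
identity of polynomials. -/
def HasRodriguesFormula (k α β : ℕ) (p : R[X]) : Prop :=
  C ((-2) ^ k * (k ! : R)) * (jacobiWeight R α β * p) =
    derivative^[k] (jacobiWeight R (α + k) (β + k))

/-- Jacobi's differential equation `(1 - x²) p'' + (b - a - (a + b + 2) x) p' + l p = 0`. -/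
def SolvesJacobiODE (a b l : R) (p : R[X]) : Prop :=
  (1 - X ^ 2) * derivative (derivative p) + (C (b - a) - C (a + b + 2) * X) * derivative p +
    C l * p = 0

theorem jacobiWeight_ne_zero [Nontrivial R] (α β : ℕ) : jacobiWeight R α β ≠ 0 := by
  intro h
  simpa [jacobiWeight] using congrArg (eval 0) h

theorem one_sub_X_sq_mul_derivative_jacobiWeight (α β : ℕ) :
    (1 - X ^ 2) * derivative (jacobiWeight R α β) =
      (C (β - α : R) - C (α + β : R) * X) * jacobiWeight R α β := by
  have left : (1 - X) * derivative ((1 - X) ^ α : R[X]) = -(α : R[X]) * (1 - X) ^ α := by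
    cases α <;> simp [derivative_pow]; ring
  have right : (1 + X) * derivative ((1 + X) ^ β : R[X]) = (β : R[X]) * (1 + X) ^ β := by
    cases β <;> simp [derivative_pow]; ring
  simp only [jacobiWeight, derivative_mul, map_sub, map_add, map_natCast]
  linear_combination (1 + X) * (1 + X) ^ β * left + (1 - X) * (1 - X) ^ α * right

theorem one_sub_X_sq_mul_derivative_derivative_jacobiWeight (α β : ℕ) :
    (1 - X ^ 2) * derivative (derivative (jacobiWeight R α β)) =
      (C (β - α : R) - C (α + β - 2 : R) * X) * derivative (jacobiWeight R α β) -
        C (α + β : R) * jacobiWeight R α β := by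
  have h := congrArg derivative (one_sub_X_sq_mul_derivative_jacobiWeight (R := R) α β)
  simp only [derivative_mul, derivative_sub, derivative_one, derivative_X_sq, derivative_C,
    derivative_X] at h
  simp only [map_sub, map_add, map_natCast, C_ofNat] at h ⊢
  linear_combination h

theorem one_sub_X_sq_mul_iterate_derivative_jacobiWeight (k α β : ℕ) :
    (1 - X ^ 2) * derivative (derivative (derivative^[k] (jacobiWeight R (α + k) (β + k)))) =
      (C (β - α : R) - C (α + β - 2 : R) * X) *
          derivative (derivative^[k] (jacobiWeight R (α + k) (β + k))) -
        C ((k + 1) * (k + α + β) : R) * derivative^[k] (jacobiWeight R (α + k) (β + k)) := by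
  set U := jacobiWeight R (α + k) (β + k)
  have h : derivative^[2] U - derivative^[2] U * X ^ 2 =
      C ((β - α : R)) * derivative U - C (α + β + 2 * k - 2 : R) * (derivative U * X) -
        C (α + β + 2 * k : R) * U := by
    have := one_sub_X_sq_mul_derivative_derivative_jacobiWeight (R := R) (α + k) (β + k)
    simp only [Nat.cast_add, map_add, map_sub, map_mul, map_natCast, C_ofNat,
      Function.iterate_succ_apply, Function.iterate_zero, id_eq] at this ⊢
    linear_combination this
  have hk : ((k * (k - 1) : ℕ) : R[X]) = k * (k - 1) := by cases k <;> simp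
  have h' := congrArg derivative^[k] h
  simp only [iterate_derivative_sub, iterate_derivative_C_mul, iterate_derivative_derivative_mul_X,
    iterate_derivative_derivative_mul_X_sq, ← Function.iterate_add_apply,
    ← Function.iterate_succ_apply, nsmul_eq_mul, hk] at h'
  simp only [← Function.iterate_succ_apply' derivative]
  simp only [map_add, map_sub, map_mul, map_natCast, C_ofNat, map_one, Nat.cast_mul,
    Nat.cast_ofNat, Nat.succ_eq_add_one] at h' ⊢
  linear_combination h'

theorem eval_iterate_derivative_X_sub_C_pow_mul (k : ℕ) (c : R) (q : R[X]) :
    (derivative^[k] ((X - C c) ^ k * q)).eval c = k ! * q.eval c := by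
  rw [← coe_aeval_eq_eval c, aeval_iterate_derivative_self (p' := q) _ _ _ (by simp),
    coe_aeval_eq_eval, nsmul_eq_mul]

theorem eval_of_C_mul_X_sub_C_pow_mul_eq_iterate_derivative {a c : R} {i k : ℕ} {q s : R[X]}
    (h : C a * ((X - C c) ^ i * q) = derivative^[k] ((X - C c) ^ (i + k) * s)) :
    a * (i ! * q.eval c) = (i + k)! * s.eval c := by
  simpa [iterate_derivative_C_mul, ← Function.iterate_add_apply,
    eval_iterate_derivative_X_sub_C_pow_mul] using congrArg (fun r => (derivative^[i] r).eval c) h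

namespace HasRodriguesFormula

variable [IsDomain R] [CharZero R] {k α β : ℕ} {p : R[X]}

theorem eq_one (h : HasRodriguesFormula 0 α β p) : p = 1 :=
  mul_left_cancel₀ (jacobiWeight_ne_zero (R := R) α β) (by simpa [HasRodriguesFormula] using h)

theorem solvesJacobiODE (h : HasRodriguesFormula k α β p) :
    SolvesJacobiODE (α : R) β (k * (k + α + β + 1)) p := by
  have hc : (-2 : R) ^ k * (k ! : R) ≠ 0 := by simp [Nat.factorial_ne_zero]
  have weighted := one_sub_X_sq_mul_iterate_derivative_jacobiWeight (R := R) k α β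
  rw [← show _ = derivative^[k] _ from h] at weighted
  generalize (-2 : R) ^ k * (k ! : R) = c at hc weighted
  refine (mul_eq_zero.1 ?_).resolve_left
    (mul_ne_zero (C_ne_zero.2 hc) (jacobiWeight_ne_zero (R := R) α β))
  have first := one_sub_X_sq_mul_derivative_jacobiWeight (R := R) α β
  have second := one_sub_X_sq_mul_derivative_derivative_jacobiWeight (R := R) α β
  simp only [derivative_mul, derivative_C, zero_mul, zero_add, derivative_add] at weighted
  simp only [map_add, map_sub, map_mul, map_natCast, C_ofNat, map_one] at weighted first second ⊢
  linear_combination weighted - C c * p * second - 2 * C c * derivative p * first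

theorem eval_one (h : HasRodriguesFormula k α β p) : p.eval 1 = (α + k).choose k := by
  have factor (i j : ℕ) : jacobiWeight R i j = (X - C 1) ^ i * (C ((-1) ^ i) * (1 + X) ^ j) := by
    rw [jacobiWeight, C_pow, ← mul_assoc, ← mul_pow]
    simp
  rw [HasRodriguesFormula, factor, factor, mul_assoc] at h
  have endpoint := eval_of_C_mul_X_sub_C_pow_mul_eq_iterate_derivative h
  simp only [eval_mul, eval_C, eval_pow, eval_add, Polynomial.eval_one, eval_X, one_add_one_eq_two,
    ← Nat.add_choose_mul_factorial_mul_factorial, Nat.cast_mul] at endpoint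
  have hunit : ((-1) ^ (α + k) * 2 ^ (β + k) * α ! * k ! : R) ≠ 0 := by
    simp [Nat.factorial_ne_zero]
  refine mul_left_cancel₀ hunit ?_
  rw [neg_pow 2 k] at endpoint
  linear_combination endpoint

theorem eval_neg_one (h : HasRodriguesFormula k α β p) :
    p.eval (-1) = (-1) ^ k * (β + k).choose k := by
  have factor (i j : ℕ) : jacobiWeight R i j = (X - C (-1)) ^ j * (1 - X) ^ i := by
    rw [jacobiWeight, mul_comm, C_neg, C_1, sub_neg_eq_add, add_comm]
  rw [HasRodriguesFormula, factor, factor, mul_assoc] at h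
  have endpoint := eval_of_C_mul_X_sub_C_pow_mul_eq_iterate_derivative h
  simp only [eval_mul, eval_pow, eval_sub, Polynomial.eval_one, eval_X, sub_neg_eq_add,
    one_add_one_eq_two, ← Nat.add_choose_mul_factorial_mul_factorial, Nat.cast_mul] at endpoint
  have hunit : (2 ^ (α + k) * β ! * k ! : R) ≠ 0 := by simp [Nat.factorial_ne_zero]
  have hsign : ((-1) ^ k * (-1) ^ k : R) = 1 := by rw [← mul_pow]; simp
  refine mul_left_cancel₀ hunit ?_
  rw [neg_pow 2 k] at endpoint
  linear_combination (-1) ^ k * endpoint - 2 ^ (α + k) * β ! * k ! * p.eval (-1) * hsign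

end HasRodriguesFormula

end JacobiPolynomials

theorem iteratedDeriv_polynomial_eval (k : ℕ) (p : ℝ[X]) :
    iteratedDeriv k (fun x => p.eval x) = fun x => (derivative^[k] p).eval x := by
  have hsemi : Function.Semiconj (fun (q : ℝ[X]) x => q.eval x) derivative deriv := fun q => by
    funext x
    simp
  rw [iteratedDeriv_eq_iterate]
  exact (hsemi.iterate_right k p).symm

theorem IsJacobi.exists_hasRodriguesFormula {J : ℕ → ℕ → ℕ → ℝ → ℝ} (hJ : IsJacobi J)
    (k α β : ℕ) :
    ∃ p : ℝ[X], (∀ x, J k α β x = p.eval x) ∧ HasRodriguesFormula k α β p := by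
  obtain ⟨⟨p, hp⟩, formula⟩ := hJ k α β
  refine ⟨p, hp, eq_of_infinite_eval_eq _ _
    ((Set.Ioo_infinite (show (-1 : ℝ) < 1 by norm_num)).mono fun x hx => ?_)⟩
  have weight : (fun y : ℝ => (1 - y) ^ (α + k) * (1 + y) ^ (β + k)) =
      fun y => (jacobiWeight ℝ (α + k) (β + k)).eval y := by
    funext y
    simp [jacobiWeight]
  have hsub : 1 - x ≠ 0 := (sub_pos.2 hx.2).ne'
  have hadd : 1 + x ≠ 0 := by linarith [hx.1]
  have hp := (hp x).symm.trans (formula x hx)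
  rw [jacobiFormula, weight, iteratedDeriv_polynomial_eval, zpow_neg, zpow_neg, zpow_natCast,
    zpow_natCast] at hp
  have hsign : ((-1 : ℝ) ^ k) ^ 2 = 1 := by rw [← pow_mul, mul_comm, pow_mul]; simp
  simp only [Set.mem_ofPred_eq, eval_mul, eval_C, hp, jacobiWeight, eval_pow, eval_sub, eval_add,
    Polynomial.eval_one, eval_X]
  rw [neg_pow]
  field_simp
  linear_combination eval x (derivative^[k] ((1 - X) ^ (α + k) * (1 + X) ^ (β + k))) * hsign

section SoninEnergy

variable {a b l x : ℝ} {p : ℝ[X]}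

theorem SolvesJacobiODE.eval (h : SolvesJacobiODE a b l p) (x : ℝ) :
    (1 - x ^ 2) * p.derivative.derivative.eval x +
      (b - a - (a + b + 2) * x) * p.derivative.eval x + l * p.eval x = 0 := by
  simpa using congrArg (Polynomial.eval x) h

/-- Sonin's energy `l p(x)² + (1 - x²) p'(x)²`. For a solution `p` of Jacobi's equation its
derivative is `p'(x)²` times an affine function, so its maximum over `[-1, 1]` is attained at an
endpoint, where the second summand vanishes. -/
noncomputable def soninEnergy (l : ℝ) (p : ℝ[X]) (x : ℝ) : ℝ :=
  l * p.eval x ^ 2 + (1 - x ^ 2) * p.derivative.eval x ^ 2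

theorem SolvesJacobiODE.hasDerivAt_soninEnergy (h : SolvesJacobiODE a b l p) (x : ℝ) :
    HasDerivAt (soninEnergy l p) (2 * p.derivative.eval x ^ 2 * (a - b + (a + b + 1) * x)) x := by
  have hp := ((p.hasDerivAt x).pow 2).const_mul l
  have hp' := ((hasDerivAt_pow 2 x).const_sub 1).mul ((p.derivative.hasDerivAt x).pow 2)
  refine (hp.add hp').congr_deriv ?_
  simp only [Pi.pow_apply, Nat.cast_ofNat, Nat.add_one_sub_one, pow_one]
  linear_combination 2 * p.derivative.eval x * h.eval x

theorem SolvesJacobiODE.soninEnergy_le_max (h : SolvesJacobiODE a b l p) (hab : 0 ≤ a + b + 1)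
    (hx : x ∈ Icc (-1) 1) :
    soninEnergy l p x ≤ max (soninEnergy l p (-1)) (soninEnergy l p 1) := by
  have hcont : Continuous (soninEnergy l p) := by
    unfold soninEnergy
    fun_prop
  rcases le_total (a - b + (a + b + 1) * x) 0 with hsign | hsign
  · have hanti : AntitoneOn (soninEnergy l p) (Icc (-1) x) :=
      antitoneOn_of_hasDerivWithinAt_nonpos (convex_Icc _ _) hcont.continuousOn
        (fun y _ => (h.hasDerivAt_soninEnergy y).hasDerivWithinAt) fun y hy =>
          mul_nonpos_of_nonneg_of_nonpos (by positivity)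
            (by nlinarith [(interior_subset hy).2])
    exact le_max_of_le_left (hanti ⟨le_rfl, hx.1⟩ ⟨hx.1, le_rfl⟩ hx.1)
  · have hmono : MonotoneOn (soninEnergy l p) (Icc x 1) :=
      monotoneOn_of_hasDerivWithinAt_nonneg (convex_Icc _ _) hcont.continuousOn
        (fun y _ => (h.hasDerivAt_soninEnergy y).hasDerivWithinAt) fun y hy =>
          mul_nonneg (by positivity) (by nlinarith [(interior_subset hy).1])
    exact le_max_of_le_right (hmono ⟨le_rfl, hx.2⟩ ⟨hx.2, le_rfl⟩ hx.2)

/-- The larger of the absolute values of `P_k^{(α,β)}` at `1` and `-1`, which is the maximum of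
`|P_k^{(α,β)}|` over `[-1, 1]`. -/
def jacobiSup (k α β : ℕ) : ℕ :=
  max ((α + k).choose k) ((β + k).choose k)

namespace HasRodriguesFormula

variable {k α β : ℕ}

theorem soninEnergy_le (h : HasRodriguesFormula k α β p) (hx : x ∈ Icc (-1) 1) :
    soninEnergy (k * (k + α + β + 1)) p x ≤ k * (k + α + β + 1) * (jacobiSup k α β : ℝ) ^ 2 := by
  refine (h.solvesJacobiODE.soninEnergy_le_max (by positivity) hx).trans (max_le ?_ ?_)
  · rw [soninEnergy, h.eval_neg_one, mul_pow, ← pow_mul, mul_comm k, pow_mul, neg_one_sq, one_pow]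
    simp only [one_mul, sub_self, zero_mul, add_zero]
    gcongr
    exact le_max_right _ _
  · rw [soninEnergy, h.eval_one]
    simp only [one_pow, sub_self, zero_mul, add_zero]
    gcongr
    exact le_max_left _ _

theorem abs_eval_le (h : HasRodriguesFormula k α β p) (hx : x ∈ Icc (-1) 1) :
    |p.eval x| ≤ jacobiSup k α β := by
  rcases Nat.eq_zero_or_pos k with rfl | hk
  · simp [h.eq_one, jacobiSup]
  refine abs_le_of_sq_le_sq ?_ (Nat.cast_nonneg _)
  have hpos : (0 : ℝ) < k * (k + α + β + 1) := by positivity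
  have henergy := h.soninEnergy_le hx
  have hnonneg : 0 ≤ (1 - x ^ 2) * p.derivative.eval x ^ 2 :=
    mul_nonneg (by nlinarith [hx.1, hx.2]) (sq_nonneg _)
  rw [soninEnergy] at henergy
  exact le_of_mul_le_mul_left (by linarith) hpos

theorem one_sub_sq_mul_eval_derivative_sq_le (h : HasRodriguesFormula k α β p)
    (hx : x ∈ Icc (-1) 1) :
    (1 - x ^ 2) * p.derivative.eval x ^ 2 ≤ k * (k + α + β + 1) * (jacobiSup k α β : ℝ) ^ 2 :=
  le_trans (le_add_of_nonneg_left (by positivity)) (h.soninEnergy_le hx)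

end HasRodriguesFormula

end SoninEnergy

section AngularVariable

/-- `y` solves `y'' + p y' + κ y = 0` on `S` and is of class `C²`, with `|y|` and `|y'|` bounded
everywhere by `M`. -/
structure IsBoundedODESolution (S : Set ℝ) (p κ : ℝ → ℝ) (M : ℝ) (y : ℝ → ℝ) : Prop where
  contDiff : ContDiff ℝ 2 y
  abs_le (x : ℝ) : |y x| ≤ M
  abs_deriv_le (x : ℝ) : |deriv y x| ≤ M
  ode : ∀ x ∈ S, iteratedDeriv 2 y x + p x * deriv y x + κ x * y x = 0

/-- The angles at which both `tan` and `cot` are finite. -/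
def regularAngles : Set ℝ :=
  {x | sin (2 * x) ≠ 0}

/-- The first-order coefficient of Jacobi's equation in the angular variable `θ`, where
`x = cos 2θ`. -/
noncomputable def jacobiDrift (a b θ : ℝ) : ℝ :=
  (2 * a + 1) * cot θ - (2 * b + 1) * tan θ

variable {x : ℝ}

theorem sin_ne_zero_of_mem_regularAngles (hx : x ∈ regularAngles) : sin x ≠ 0 := by
  have h : sin (2 * x) ≠ 0 := hx
  rw [sin_two_mul] at h
  exact right_ne_zero_of_mul (left_ne_zero_of_mul h)

theorem cos_ne_zero_of_mem_regularAngles (hx : x ∈ regularAngles) : cos x ≠ 0 := by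
  have h : sin (2 * x) ≠ 0 := hx
  rw [sin_two_mul] at h
  exact right_ne_zero_of_mul h

theorem isOpen_regularAngles : IsOpen regularAngles :=
  isOpen_ne_fun (by fun_prop) continuous_const

theorem continuousOn_tan_regularAngles : ContinuousOn tan regularAngles :=
  continuousOn_tan.mono fun _ => cos_ne_zero_of_mem_regularAngles

theorem continuousOn_jacobiDrift (a b : ℝ) : ContinuousOn (jacobiDrift a b) regularAngles := by
  have hcot : ContinuousOn cot regularAngles := by
    simp only [funext cot_eq_cos_div_sin]
    exact continuousOn_cos.div continuousOn_sin fun _ => sin_ne_zero_of_mem_regularAngles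
  exact (hcot.const_mul _).sub (continuousOn_tan_regularAngles.const_mul _)

theorem jacobiDrift_zero_zero (hx : x ∈ regularAngles) :
    jacobiDrift 0 0 x = 2 * cot (2 * x) := by
  have hs := sin_ne_zero_of_mem_regularAngles hx
  have hc := cos_ne_zero_of_mem_regularAngles hx
  rw [jacobiDrift, cot_eq_cos_div_sin, cot_eq_cos_div_sin, tan_eq_sin_div_cos, sin_two_mul,
    cos_two_mul']
  field_simp
  ring

theorem deriv_eval_cos_two_mul (p : ℝ[X]) :
    deriv (fun x => p.eval (cos (2 * x))) =
      fun x => -2 * (sin (2 * x) * p.derivative.eval (cos (2 * x))) := by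
  funext x
  have hcos : HasDerivAt (fun x => cos (2 * x)) (-sin (2 * x) * 2) x := by
    simpa using ((hasDerivAt_id x).const_mul 2).cos
  exact ((p.hasDerivAt _).comp x hcos).deriv.trans (by ring)

theorem iteratedDeriv_two_eval_cos_two_mul (p : ℝ[X]) (x : ℝ) :
    iteratedDeriv 2 (fun x => p.eval (cos (2 * x))) x =
      4 * (sin (2 * x) ^ 2 * p.derivative.derivative.eval (cos (2 * x)) -
        cos (2 * x) * p.derivative.eval (cos (2 * x))) := by
  have hsin : HasDerivAt (fun x => sin (2 * x)) (cos (2 * x) * 2) x := by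
    simpa using ((hasDerivAt_id x).const_mul 2).sin
  have hp' : HasDerivAt (fun x => p.derivative.eval (cos (2 * x)))
      (-2 * (sin (2 * x) * p.derivative.derivative.eval (cos (2 * x)))) x := by
    rw [← congrFun (deriv_eval_cos_two_mul p.derivative) x]
    exact DifferentiableAt.hasDerivAt (by fun_prop)
  rw [iteratedDeriv_succ, iteratedDeriv_one, deriv_eval_cos_two_mul]
  exact ((hsin.mul hp').const_mul (-2)).deriv.trans (by ring)

theorem SolvesJacobiODE.angular {a b l : ℝ} {p : ℝ[X]} (h : SolvesJacobiODE a b l p)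
    (hx : x ∈ regularAngles) :
    iteratedDeriv 2 (fun x => p.eval (cos (2 * x))) x +
      jacobiDrift a b x * deriv (fun x => p.eval (cos (2 * x))) x +
        4 * l * p.eval (cos (2 * x)) = 0 := by
  have hcot : sin (2 * x) * cot x = 1 + cos (2 * x) := by
    have := sin_ne_zero_of_mem_regularAngles hx
    rw [cot_eq_cos_div_sin, sin_two_mul, cos_two_mul]
    field_simp
    ring
  have htan : sin (2 * x) * tan x = 1 - cos (2 * x) := by
    have := cos_ne_zero_of_mem_regularAngles hx
    rw [tan_eq_sin_div_cos, sin_two_mul, cos_two_mul, cos_sq']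
    field_simp
    ring
  have hode := h.eval (cos (2 * x))
  rw [← sin_sq] at hode
  rw [iteratedDeriv_two_eval_cos_two_mul, deriv_eval_cos_two_mul, jacobiDrift]
  linear_combination 4 * hode - 2 * p.derivative.eval (cos (2 * x)) *
    ((2 * a + 1) * hcot - (2 * b + 1) * htan)

theorem HasRodriguesFormula.isBoundedODESolution {k α β : ℕ} {p : ℝ[X]}
    (h : HasRodriguesFormula k α β p) :
    IsBoundedODESolution regularAngles (jacobiDrift α β) (fun _ => 4 * (k * (k + α + β + 1)))
      (2 * (k + α + β + 1) * jacobiSup k α β) (fun x => p.eval (cos (2 * x))) where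
  contDiff := by
    have hp : ContDiff ℝ 2 (fun x => p.eval x) := by simpa using p.contDiff_aeval (𝕜 := ℝ) 2
    fun_prop
  abs_le x := by
    refine (h.abs_eval_le (cos_mem_Icc _)).trans (le_mul_of_one_le_left (by positivity) ?_)
    have : (0 : ℝ) ≤ k + α + β := by positivity
    linarith
  abs_deriv_le x := by
    refine abs_le_of_sq_le_sq ?_ (by positivity)
    have hbound := h.one_sub_sq_mul_eval_derivative_sq_le (cos_mem_Icc (2 * x))
    rw [← sin_sq] at hbound
    have hk : (k : ℝ) * (k + α + β + 1) ≤ (k + α + β + 1) * (k + α + β + 1) := by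
      gcongr
      have : (0 : ℝ) ≤ α + β + 1 := by positivity
      linarith
    rw [deriv_eval_cos_two_mul]
    linear_combination 4 * hbound + 4 * (jacobiSup k α β : ℝ) ^ 2 * hk
  ode _ hx := h.solvesJacobiODE.angular hx

theorem IsJacobi.isBoundedODESolution {J : ℕ → ℕ → ℕ → ℝ → ℝ} (hJ : IsJacobi J) (k α β : ℕ) :
    IsBoundedODESolution regularAngles (jacobiDrift α β) (fun _ => 4 * (k * (k + α + β + 1)))
      (2 * (k + α + β + 1) * jacobiSup k α β) (fun x => J k α β (cos (2 * x))) := by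
  obtain ⟨p, hp, hrod⟩ := hJ.exists_hasRodriguesFormula k α β
  simpa only [hp] using hrod.isBoundedODESolution

theorem hasDerivAt_cos_pow (j : ℕ) (hx : cos x ≠ 0) :
    HasDerivAt (fun x => cos x ^ j) (-j * tan x * cos x ^ j) x := by
  refine ((hasDerivAt_cos x).pow j).congr_deriv ?_
  rw [tan_eq_sin_div_cos]
  cases j
  · simp
  · rw [Nat.add_sub_cancel]
    field_simp
    ring

theorem iteratedDeriv_two_cos_pow (j : ℕ) (hx : cos x ≠ 0) :
    iteratedDeriv 2 (fun x => cos x ^ j) x = (j * (j - 1) * tan x ^ 2 - j) * cos x ^ j := by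
  have hderiv : deriv (fun x => cos x ^ j) =ᶠ[𝓝 x] fun x => -j * tan x * cos x ^ j := by
    filter_upwards [continuous_cos.continuousAt.eventually_ne hx] with y hy
    exact (hasDerivAt_cos_pow j hy).deriv
  have hsecond := ((hasDerivAt_tan hx).const_mul (-j : ℝ)).mul (hasDerivAt_cos_pow j hx)
  rw [iteratedDeriv_succ, iteratedDeriv_one, hderiv.deriv_eq]
  refine hsecond.deriv.trans ?_
  have hsec : 1 / cos x ^ 2 = 1 + tan x ^ 2 := by
    rw [one_div, ← inv_one_add_tan_sq hx, inv_inv]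
  rw [hsec]
  ring

theorem abs_cos_pow_le_one (j : ℕ) (x : ℝ) : |cos x ^ j| ≤ 1 := by
  rw [abs_pow]
  exact pow_le_one₀ (abs_nonneg _) (abs_cos_le_one x)

theorem abs_deriv_cos_pow_le (j : ℕ) (x : ℝ) : |deriv (fun x => cos x ^ j) x| ≤ j := by
  rw [deriv_fun_pow differentiableAt_cos, Real.deriv_cos, mul_assoc, abs_mul, Nat.abs_cast, abs_mul,
    abs_neg]
  exact mul_le_of_le_one_right (Nat.cast_nonneg j)
    (mul_le_one₀ (abs_cos_pow_le_one _ x) (abs_nonneg _) (abs_sin_le_one x))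

theorem deriv_cos_pow_mul {y : ℝ → ℝ} (j : ℕ) (hy : DifferentiableAt ℝ y x) :
    deriv (fun x => cos x ^ j * y x) x =
      deriv (fun x => cos x ^ j) x * y x + cos x ^ j * deriv y x :=
  deriv_fun_mul (differentiableAt_cos.fun_pow j) hy

namespace IsBoundedODESolution

variable {a b M : ℝ} {κ y : ℝ → ℝ}

theorem nonneg {S : Set ℝ} {p : ℝ → ℝ} (h : IsBoundedODESolution S p κ M y) : 0 ≤ M :=
  (abs_nonneg _).trans (h.abs_le 0)

theorem differentiableAt {S : Set ℝ} {p : ℝ → ℝ} (h : IsBoundedODESolution S p κ M y) (x : ℝ) :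
    DifferentiableAt ℝ y x :=
  h.contDiff.differentiable two_ne_zero x

theorem ode_cos_pow_mul (h : IsBoundedODESolution regularAngles (jacobiDrift a b) κ M y) (j : ℕ)
    (hx : x ∈ regularAngles) :
    iteratedDeriv 2 (fun x => cos x ^ j * y x) x +
      jacobiDrift a (b - j) x * deriv (fun x => cos x ^ j * y x) x +
        (κ x + 2 * j * (a + 1) - j * (2 * b - j) * tan x ^ 2) * (cos x ^ j * y x) = 0 := by
  have hc := cos_ne_zero_of_mem_regularAngles hx
  have hs := sin_ne_zero_of_mem_regularAngles hx
  have hcot : cot x * tan x = 1 := by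
    rw [cot_eq_cos_div_sin, tan_eq_sin_div_cos]
    field_simp
  have hsecond : iteratedDeriv 2 (fun x => cos x ^ j * y x) x =
      cos x ^ j * iteratedDeriv 2 y x + 2 * deriv (fun x => cos x ^ j) x * deriv y x +
        iteratedDeriv 2 (fun x => cos x ^ j) x * y x := by
    rw [iteratedDeriv_fun_mul (contDiff_cos.pow j).contDiffAt h.contDiff.contDiffAt]
    simp [Finset.sum_range_succ]
  have hode := h.ode x hx
  rw [hsecond, deriv_cos_pow_mul j (h.differentiableAt x), (hasDerivAt_cos_pow j hc).deriv,
    iteratedDeriv_two_cos_pow j hc]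
  rw [jacobiDrift] at hode ⊢
  linear_combination cos x ^ j * hode - j * (2 * a + 1) * cos x ^ j * y x * hcot

theorem cos_pow_mul (h : IsBoundedODESolution regularAngles (jacobiDrift a b) κ M y) (j : ℕ) :
    IsBoundedODESolution regularAngles (jacobiDrift a (b - j))
      (fun x => κ x + 2 * j * (a + 1) - j * (2 * b - j) * tan x ^ 2) ((j + 1) * M)
      (fun x => cos x ^ j * y x) where
  contDiff := (contDiff_cos.pow j).mul h.contDiff
  abs_le x := by
    have hM := h.nonneg
    rw [abs_mul]
    calc |cos x ^ j| * |y x| ≤ 1 * M := by gcongr; exacts [abs_cos_pow_le_one j x, h.abs_le x]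
      _ ≤ (j + 1) * M := by gcongr; simp
  abs_deriv_le x := by
    rw [deriv_cos_pow_mul j (h.differentiableAt x), add_mul, one_mul]
    refine (abs_add_le _ _).trans ?_
    rw [abs_mul, abs_mul]
    gcongr
    · exact abs_deriv_cos_pow_le j x
    · exact h.abs_le x
    · exact (mul_le_of_le_one_left (abs_nonneg _) (abs_cos_pow_le_one j x)).trans (h.abs_deriv_le x)
  ode _ hx := h.ode_cos_pow_mul j hx

end IsBoundedODESolution

end AngularVariable

section TermwiseDifferentiation

variable {ι : Type*} {x : ℝ} {S : Set ℝ}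

theorem hasDerivAt_tsum_of_locally_bounded {F : Type*} [NormedAddCommGroup F] [NormedSpace ℝ F]
    [CompleteSpace F] {f f' : ι → ℝ → F} {G : ℝ → ℝ} {u : ι → ℝ} (hS : IsOpen S)
    (hf : ∀ i, ∀ x ∈ S, HasDerivAt (f i) (f' i x) x) (hG : ContinuousOn G S) (hu : Summable u)
    (hf' : ∀ i, ∀ x ∈ S, ‖f' i x‖ ≤ G x * u i) (hx : x ∈ S) (hsum : Summable fun i => f i x) :
    HasDerivAt (fun y => ∑' i, f i y) (∑' i, f' i x) x := by
  have hnear : ∀ᶠ y in 𝓝 x, |G y| < |G x| + 1 ∧ y ∈ S :=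
    ((hG.continuousAt (hS.mem_nhds hx)).abs.eventually_lt_const (lt_add_one _)).and
      (hS.mem_nhds hx)
  obtain ⟨δ, hδ, hball⟩ := Metric.eventually_nhds_iff_ball.1 hnear
  refine hasDerivAt_tsum_of_isPreconnected (hu.abs.mul_left (|G x| + 1)) Metric.isOpen_ball
    (convex_ball x δ).isPreconnected (fun i y hy => hf i y (hball y hy).2) (fun i y hy => ?_)
    (Metric.mem_ball_self hδ) hsum (Metric.mem_ball_self hδ)
  obtain ⟨hGy, hyS⟩ := hball y hy
  calc ‖f' i y‖ ≤ |G y * u i| := (hf' i y hyS).trans (le_abs_self _)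
    _ = |G y| * |u i| := abs_mul _ _
    _ ≤ (|G x| + 1) * |u i| := by gcongr

namespace IsBoundedODESolution

variable {p g : ℝ → ℝ}

theorem abs_iteratedDeriv_two_le {κ y : ℝ → ℝ} {M ν : ℝ} (h : IsBoundedODESolution S p κ M y)
    (hν : 1 ≤ ν) (hx : x ∈ S) (hκ : |κ x| ≤ g x * ν) :
    |iteratedDeriv 2 y x| ≤ (|p x| + g x) * (ν * M) := by
  have hode : iteratedDeriv 2 y x = -(p x * deriv y x + κ x * y x) := by
    linear_combination h.ode x hx
  have hM := h.nonneg
  rw [hode, abs_neg]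
  calc |p x * deriv y x + κ x * y x| ≤ |p x| * |deriv y x| + |κ x| * |y x| := by
        simpa only [abs_mul] using abs_add_le (p x * deriv y x) (κ x * y x)
    _ ≤ |p x| * (ν * M) + g x * ν * M := by
        gcongr
        · exact (h.abs_deriv_le x).trans (le_mul_of_one_le_left hM hν)
        · exact (abs_nonneg _).trans hκ
        · exact h.abs_le x
    _ = (|p x| + g x) * (ν * M) := by ring

variable {κ y : ι → ℝ → ℝ} {γ M ν : ι → ℝ}

theorem summable_mul (h : ∀ i, IsBoundedODESolution S p (κ i) (M i) (y i))
    (hsum : Summable fun i => |γ i| * M i) (x : ℝ) : Summable fun i => γ i * y i x :=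
  hsum.of_norm_bounded fun i => by
    rw [norm_mul, norm_eq_abs, norm_eq_abs]
    gcongr
    exact (h i).abs_le x

theorem summable_mul_deriv (h : ∀ i, IsBoundedODESolution S p (κ i) (M i) (y i))
    (hsum : Summable fun i => |γ i| * M i) (x : ℝ) : Summable fun i => γ i * deriv (y i) x :=
  hsum.of_norm_bounded fun i => by
    rw [norm_mul, norm_eq_abs, norm_eq_abs]
    gcongr
    exact (h i).abs_deriv_le x

theorem hasDerivAt_tsum (h : ∀ i, IsBoundedODESolution S p (κ i) (M i) (y i))
    (hsum : Summable fun i => |γ i| * M i) (x : ℝ) :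
    HasDerivAt (fun x => ∑' i, γ i * y i x) (∑' i, γ i * deriv (y i) x) x :=
  hasDerivAt_tsum_of_locally_bounded (G := 1) isOpen_univ
    (fun i x _ => ((h i).differentiableAt x).hasDerivAt.const_mul (γ i)) continuousOn_const hsum
    (fun i x _ => by
      rw [norm_mul, norm_eq_abs, norm_eq_abs, Pi.one_apply, one_mul]
      gcongr
      exact (h i).abs_deriv_le x)
    (mem_univ x) (summable_mul h hsum x)

theorem hasSum_deriv (h : ∀ i, IsBoundedODESolution S p (κ i) (M i) (y i))
    (hsum : Summable fun i => |γ i| * M i) (x : ℝ) :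
    HasSum (fun i => γ i * deriv (y i) x) (deriv (fun x => ∑' i, γ i * y i x) x) := by
  rw [(hasDerivAt_tsum h hsum x).deriv]
  exact (summable_mul_deriv h hsum x).hasSum

theorem summable_of_weighted (h : ∀ i, IsBoundedODESolution S p (κ i) (M i) (y i))
    (hν : ∀ i, 1 ≤ ν i) (hsum : Summable fun i => |γ i| * (ν i * M i)) :
    Summable fun i => |γ i| * M i :=
  hsum.of_nonneg_of_le (fun i => mul_nonneg (abs_nonneg _) (h i).nonneg) fun i => by
    gcongr
    exact le_mul_of_one_le_left (h i).nonneg (hν i)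

theorem hasSum_iteratedDeriv_two (h : ∀ i, IsBoundedODESolution S p (κ i) (M i) (y i))
    (hS : IsOpen S) (hp : ContinuousOn p S) (hg : ContinuousOn g S)
    (hν : ∀ i, 1 ≤ ν i) (hκ : ∀ i, ∀ x ∈ S, |κ i x| ≤ g x * ν i)
    (hsum : Summable fun i => |γ i| * (ν i * M i)) (hx : x ∈ S) :
    HasSum (fun i => γ i * iteratedDeriv 2 (y i) x)
      (iteratedDeriv 2 (fun x => ∑' i, γ i * y i x) x) := by
  have hsum₁ := summable_of_weighted h hν hsum
  have hderiv : deriv (fun x => ∑' i, γ i * y i x) = fun x => ∑' i, γ i * deriv (y i) x :=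
    funext fun x => (hasDerivAt_tsum h hsum₁ x).deriv
  have hsecond (i : ι) (x : ℝ) : HasDerivAt (deriv (y i)) (iteratedDeriv 2 (y i) x) x := by
    rw [iteratedDeriv_succ, iteratedDeriv_one]
    exact ((h i).contDiff.differentiable_deriv_two x).hasDerivAt
  have hbound (i : ι) : ∀ x ∈ S, ‖γ i * iteratedDeriv 2 (y i) x‖ ≤
      (|p x| + g x) * (|γ i| * (ν i * M i)) := fun x hx => by
    rw [norm_mul, norm_eq_abs, norm_eq_abs, mul_left_comm]
    gcongr
    exact (h i).abs_iteratedDeriv_two_le (hν i) hx (hκ i x hx)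
  rw [iteratedDeriv_succ, iteratedDeriv_one, hderiv,
    (hasDerivAt_tsum_of_locally_bounded hS (fun i x _ => (hsecond i x).const_mul (γ i))
      (hp.abs.add hg) hsum hbound hx (summable_mul_deriv h hsum₁ x)).deriv]
  exact ((hsum.mul_left _).of_norm_bounded fun i => hbound i x hx).hasSum

end IsBoundedODESolution

end TermwiseDifferentiation

section SeparatedSolutions

variable {ι : Type*}

theorem hasSum_deriv_tsum_mul_exp {c l : ι → ℝ} {t : ℝ} (hl : ∀ i, 0 ≤ l i)
    (hsum : ∀ t, 0 < t → Summable fun i => |c i| * (exp (-l i * t) * (1 + l i))) (ht : 0 < t) :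
    HasSum (fun i => c i * (exp (-l i * t) * -l i))
      (deriv (fun t => ∑' i, c i * exp (-l i * t)) t) := by
  have hterm (i : ι) (t : ℝ) :
      HasDerivAt (fun t => c i * exp (-l i * t)) (c i * (exp (-l i * t) * -l i)) t := by
    simpa using (((hasDerivAt_id t).const_mul (-l i)).exp).const_mul (c i)
  have hbound (i : ι) : ∀ s ∈ Ioi (t / 2), ‖c i * (exp (-l i * s) * -l i)‖ ≤
      |c i| * (exp (-l i * (t / 2)) * (1 + l i)) := fun s hs => by
    have hli := hl i
    have hs : t / 2 < s := hs
    simp only [norm_mul, norm_neg, norm_eq_abs, abs_exp, abs_of_nonneg hli]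
    gcongr ?_ * (exp ?_ * ?_)
    · nlinarith
    · linarith
  have hsummable : Summable fun i => c i * exp (-l i * t) :=
    (hsum t ht).of_norm_bounded fun i => by
      rw [norm_mul, norm_eq_abs, norm_eq_abs, abs_exp]
      gcongr
      exact le_mul_of_one_le_right (exp_nonneg _) (le_add_of_nonneg_right (hl i))
  have hmem : t ∈ Ioi (t / 2) := half_lt_self ht
  rw [(hasDerivAt_tsum_of_isPreconnected (hsum _ (half_pos ht)) isOpen_Ioi isPreconnected_Ioi
    (fun i s _ => hterm i s) hbound hmem hsummable hmem).deriv]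
  exact ((hsum _ (half_pos ht)).of_norm_bounded fun i => hbound i t hmem).hasSum

/-- The superposition `∑ c_i exp (-l_i t) A_i(r) B_i(φ)`. -/
noncomputable def separatedSeries (c l : ι → ℝ) (A B : ι → ℝ → ℝ) (t r φ : ℝ) : ℝ :=
  ∑' i, c i * exp (-l i * t) * (A i r * B i φ)

/-- Separated solutions `exp (-l t) A(r) B(φ)` of `∂ₜh = ∂ᵣ²h + p ∂ᵣh + q (∂ᵩ²h + w ∂ᵩh)` with
coefficients `c` small enough for the series and its derivatives to converge. Here `μ` are the
eigenvalues of the fibre factors `B`; `a` and `b` bound the factors and their first derivatives. -/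
structure IsSeparatedFamily (S T : Set ℝ) (p q w : ℝ → ℝ) (c l μ a b : ι → ℝ)
    (A B : ι → ℝ → ℝ) : Prop where
  eigenvalue_nonneg (i : ι) : 0 ≤ l i
  fiberEigenvalue_nonneg (i : ι) : 0 ≤ μ i
  radial (i : ι) : IsBoundedODESolution S p (fun x => l i - q x * μ i) (a i) (A i)
  fiber (i : ι) : IsBoundedODESolution T w (fun _ => μ i) (b i) (B i)
  summable : ∀ t, 0 < t → Summable fun i =>
    |c i| * exp (-l i * t) * ((1 + l i + μ i) * (a i * b i))

namespace IsSeparatedFamily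

variable {S T : Set ℝ} {p q w : ℝ → ℝ} {c l μ a b : ι → ℝ} {A B : ι → ℝ → ℝ} {t r φ : ℝ}

theorem one_le_weight (h : IsSeparatedFamily S T p q w c l μ a b A B) (i : ι) :
    1 ≤ 1 + l i + μ i := by
  linarith [h.eigenvalue_nonneg i, h.fiberEigenvalue_nonneg i]

theorem abs_mul_le (h : IsSeparatedFamily S T p q w c l μ a b A B) (i : ι) (r φ : ℝ) :
    |A i r * B i φ| ≤ a i * b i := by
  rw [abs_mul]
  exact mul_le_mul ((h.radial i).abs_le r) ((h.fiber i).abs_le φ) (abs_nonneg _) (h.radial i).nonneg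

theorem summable_abs (h : IsSeparatedFamily S T p q w c l μ a b A B) (ht : 0 < t) (r φ : ℝ) :
    Summable fun i => |c i * exp (-l i * t) * (A i r * B i φ)| :=
  (h.summable t ht).of_nonneg_of_le (fun _ => abs_nonneg _) fun i => by
    rw [abs_mul, abs_mul, abs_exp]
    gcongr
    exact (h.abs_mul_le i r φ).trans (le_mul_of_one_le_left
      (mul_nonneg (h.radial i).nonneg (h.fiber i).nonneg) (h.one_le_weight i))

theorem hasSum_deriv_time (h : IsSeparatedFamily S T p q w c l μ a b A B) (ht : 0 < t) (r φ : ℝ) :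
    HasSum (fun i => c i * (A i r * B i φ) * (exp (-l i * t) * -l i))
      (deriv (fun t => separatedSeries c l A B t r φ) t) := by
  simp only [separatedSeries, mul_right_comm _ (exp _)]
  refine hasSum_deriv_tsum_mul_exp h.eigenvalue_nonneg (fun t ht => ?_) ht
  refine (h.summable t ht).of_nonneg_of_le (fun i => ?_) fun i => ?_
  · have := h.eigenvalue_nonneg i
    positivity
  · have hl := h.eigenvalue_nonneg i
    rw [abs_mul]
    calc |c i| * |A i r * B i φ| * (exp (-l i * t) * (1 + l i))
        ≤ |c i| * (a i * b i) * (exp (-l i * t) * (1 + l i + μ i)) := by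
          gcongr ?_ * ?_ * (?_ * ?_)
          · exact mul_nonneg (abs_nonneg _)
              (mul_nonneg (h.radial i).nonneg (h.fiber i).nonneg)
          · exact h.abs_mul_le i r φ
          · exact le_add_of_nonneg_right (h.fiberEigenvalue_nonneg i)
      _ = _ := by ring

theorem summable_radial (h : IsSeparatedFamily S T p q w c l μ a b A B) (ht : 0 < t) (φ : ℝ) :
    Summable fun i => |c i * exp (-l i * t) * B i φ| * ((1 + l i + μ i) * a i) := by
  have hweight (i : ι) : 0 ≤ (1 + l i + μ i) * a i :=
    mul_nonneg (zero_le_one.trans (h.one_le_weight i)) (h.radial i).nonneg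
  refine (h.summable t ht).of_nonneg_of_le (fun i => mul_nonneg (abs_nonneg _) (hweight i))
    fun i => ?_
  rw [abs_mul, abs_mul, abs_exp]
  calc |c i| * exp (-l i * t) * |B i φ| * ((1 + l i + μ i) * a i)
      ≤ |c i| * exp (-l i * t) * b i * ((1 + l i + μ i) * a i) :=
        mul_le_mul_of_nonneg_right (by gcongr; exact (h.fiber i).abs_le φ) (hweight i)
    _ = _ := by ring

theorem summable_fiber (h : IsSeparatedFamily S T p q w c l μ a b A B) (ht : 0 < t) (r : ℝ) :
    Summable fun i => |c i * exp (-l i * t) * A i r| * ((1 + l i + μ i) * b i) := by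
  have hweight (i : ι) : 0 ≤ (1 + l i + μ i) * b i :=
    mul_nonneg (zero_le_one.trans (h.one_le_weight i)) (h.fiber i).nonneg
  refine (h.summable t ht).of_nonneg_of_le (fun i => mul_nonneg (abs_nonneg _) (hweight i))
    fun i => ?_
  rw [abs_mul, abs_mul, abs_exp]
  calc |c i| * exp (-l i * t) * |A i r| * ((1 + l i + μ i) * b i)
      ≤ |c i| * exp (-l i * t) * a i * ((1 + l i + μ i) * b i) :=
        mul_le_mul_of_nonneg_right (by gcongr; exact (h.radial i).abs_le r) (hweight i)
    _ = _ := by ring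

theorem hasSum_radial_operator (h : IsSeparatedFamily S T p q w c l μ a b A B) (hS : IsOpen S)
    (hp : ContinuousOn p S) (hq : ContinuousOn q S) (ht : 0 < t) (hr : r ∈ S) (φ : ℝ) :
    HasSum (fun i => c i * exp (-l i * t) * B i φ * ((q r * μ i - l i) * A i r))
      (iteratedDeriv 2 (fun ρ => separatedSeries c l A B t ρ φ) r +
        p r * deriv (fun ρ => separatedSeries c l A B t ρ φ) r) := by
  have hseries : (fun ρ => separatedSeries c l A B t ρ φ) =
      fun ρ => ∑' i, c i * exp (-l i * t) * B i φ * A i ρ := by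
    simp only [separatedSeries, ← mul_assoc, mul_right_comm _ (B _ φ)]
  have hκ (i : ι) : ∀ x ∈ S, |l i - q x * μ i| ≤ (1 + |q x|) * (1 + l i + μ i) := fun x _ => by
    have hl := h.eigenvalue_nonneg i
    have hμ := h.fiberEigenvalue_nonneg i
    calc |l i - q x * μ i| ≤ |l i| + |q x * μ i| := abs_sub _ _
      _ = l i + |q x| * μ i := by rw [abs_mul, abs_of_nonneg hl, abs_of_nonneg hμ]
      _ ≤ (1 + l i + μ i) + |q x| * (1 + l i + μ i) := by gcongr <;> linarith
      _ = _ := by ring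
  have hsum := h.summable_radial ht φ
  rw [hseries]
  convert (IsBoundedODESolution.hasSum_iteratedDeriv_two h.radial hS hp
    (continuousOn_const.add hq.abs) h.one_le_weight hκ hsum hr).add
    ((IsBoundedODESolution.hasSum_deriv h.radial
      (IsBoundedODESolution.summable_of_weighted h.radial h.one_le_weight hsum) r).mul_left
        (p r)) using 2 with i
  linear_combination -(c i * exp (-l i * t) * B i φ) * (h.radial i).ode r hr

theorem hasSum_fiber_operator (h : IsSeparatedFamily S T p q w c l μ a b A B) (hT : IsOpen T)
    (hw : ContinuousOn w T) (ht : 0 < t) (r : ℝ) (hφ : φ ∈ T) :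
    HasSum (fun i => c i * exp (-l i * t) * A i r * (-μ i * B i φ))
      (iteratedDeriv 2 (fun ψ => separatedSeries c l A B t r ψ) φ +
        w φ * deriv (fun ψ => separatedSeries c l A B t r ψ) φ) := by
  have hseries : (fun ψ => separatedSeries c l A B t r ψ) =
      fun ψ => ∑' i, c i * exp (-l i * t) * A i r * B i ψ := by
    simp only [separatedSeries, ← mul_assoc]
  have hκ (i : ι) : ∀ x ∈ T, |μ i| ≤ 1 * (1 + l i + μ i) := fun x _ => by
    rw [abs_of_nonneg (h.fiberEigenvalue_nonneg i)]
    linarith [h.eigenvalue_nonneg i]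
  have hsum := h.summable_fiber ht r
  rw [hseries]
  convert (IsBoundedODESolution.hasSum_iteratedDeriv_two h.fiber hT hw
    continuousOn_const h.one_le_weight hκ hsum hφ).add
    ((IsBoundedODESolution.hasSum_deriv h.fiber
      (IsBoundedODESolution.summable_of_weighted h.fiber h.one_le_weight hsum) φ).mul_left
        (w φ)) using 2 with i
  linear_combination -(c i * exp (-l i * t) * A i r) * (h.fiber i).ode φ hφ

theorem heat_equation (h : IsSeparatedFamily S T p q w c l μ a b A B) (hS : IsOpen S)
    (hT : IsOpen T) (hp : ContinuousOn p S) (hq : ContinuousOn q S) (hw : ContinuousOn w T)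
    (ht : 0 < t) (hr : r ∈ S) (hφ : φ ∈ T) :
    deriv (fun s => separatedSeries c l A B s r φ) t =
      iteratedDeriv 2 (fun ρ => separatedSeries c l A B t ρ φ) r +
        p r * deriv (fun ρ => separatedSeries c l A B t ρ φ) r +
        q r * (iteratedDeriv 2 (fun ψ => separatedSeries c l A B t r ψ) φ +
          w φ * deriv (fun ψ => separatedSeries c l A B t r ψ) φ) := by
  refine (h.hasSum_deriv_time ht r φ).unique ?_
  convert (h.hasSum_radial_operator hS hp hq ht hr φ).add
    ((h.hasSum_fiber_operator hT hw ht r hφ).mul_left (q r)) using 2 with i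
  ring

end IsSeparatedFamily

end SeparatedSolutions

section SubellipticHeatKernel

variable {n : ℕ} {t r φ : ℝ} {J : ℕ → ℕ → ℕ → ℝ → ℝ}

/-- The coefficient `σ_{k,m}`; as in `hTerm`, the index `mk` is the pair `(m, k)`. -/
noncomputable def kernelCoeff (n : ℕ) (mk : ℕ × ℕ) : ℝ :=
  Real.Gamma (2 * n) / (4 * π ^ (2 * n + 2)) * (2 * mk.2 + 2 * mk.1 + 2 * n + 1) *
    (2 * mk.1 + 1) * (mk.2 + 2 * mk.1 + 2 * n).choose (2 * n - 1)

/-- The decay rate in time of the `(m, k)` term. -/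
def kernelEigenvalue (n : ℕ) (mk : ℕ × ℕ) : ℝ :=
  4 * mk.2 * (mk.2 + 2 * n + 2 * mk.1 + 1) + 8 * n * mk.1

/-- The eigenvalue `4 m (m + 1)` of `φ ↦ P_m(cos 2φ)`. -/
def fiberEigenvalue (mk : ℕ × ℕ) : ℝ :=
  4 * (mk.1 * (mk.1 + 1))

/-- The factor of the `(m, k)` term that depends on `r`. -/
noncomputable def radialFactor (n : ℕ) (J : ℕ → ℕ → ℕ → ℝ → ℝ) (mk : ℕ × ℕ) (r : ℝ) : ℝ :=
  cos r ^ (2 * mk.1) * J mk.2 (2 * n - 1) (2 * mk.1 + 1) (cos (2 * r))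

/-- The factor of the `(m, k)` term that depends on `φ`. -/
noncomputable def fiberFactor (J : ℕ → ℕ → ℕ → ℝ → ℝ) (mk : ℕ × ℕ) (φ : ℝ) : ℝ :=
  J mk.1 0 0 (cos (2 * φ))

/-- The quantity `k + 2m + 2n + 1`, in powers of which all estimates on the `(m, k)` term are
expressed. -/
def kernelLevel (n : ℕ) (mk : ℕ × ℕ) : ℝ :=
  mk.2 + 2 * mk.1 + 2 * n + 1

/-- A bound for `radialFactor` and its first derivative. -/
def radialBound (n : ℕ) (mk : ℕ × ℕ) : ℝ :=
  (2 * mk.1 + 1) * (2 * kernelLevel n mk * jacobiSup mk.2 (2 * n - 1) (2 * mk.1 + 1))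

/-- A bound for `fiberFactor` and its first derivative. -/
def fiberBound (mk : ℕ × ℕ) : ℝ :=
  2 * (mk.1 + 1)

theorem hTerm_eq (n : ℕ) (J : ℕ → ℕ → ℕ → ℝ → ℝ) (t r φ : ℝ) (mk : ℕ × ℕ) :
    hTerm n J t r φ mk = kernelCoeff n mk * exp (-kernelEigenvalue n mk * t) *
      (radialFactor n J mk r * fiberFactor J mk φ) := by
  rw [hTerm, kernelCoeff, kernelEigenvalue, radialFactor, fiberFactor]
  ring

theorem hKernel_eq_separatedSeries (n : ℕ) (J : ℕ → ℕ → ℕ → ℝ → ℝ) :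
    hKernel n J = separatedSeries (kernelCoeff n) (kernelEigenvalue n) (radialFactor n J)
      (fiberFactor J) := by
  funext t r φ
  simp only [hKernel, hTerm_eq, separatedSeries]

theorem natCast_two_mul_sub_one (hn : 1 ≤ n) : ((2 * n - 1 : ℕ) : ℝ) = 2 * n - 1 := by
  rw [Nat.cast_sub (by omega)]
  push_cast
  ring

theorem IsJacobi.isBoundedODESolution_radialFactor (hJ : IsJacobi J) (hn : 1 ≤ n)
    (mk : ℕ × ℕ) :
    IsBoundedODESolution regularAngles (jacobiDrift (2 * n - 1) 1)
      (fun x => kernelEigenvalue n mk - tan x ^ 2 * fiberEigenvalue mk)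
      (radialBound n mk) (radialFactor n J mk) := by
  convert (hJ.isBoundedODESolution mk.2 (2 * n - 1) (2 * mk.1 + 1)).cos_pow_mul (2 * mk.1)
    using 1
  · rw [natCast_two_mul_sub_one hn]
    push_cast
    ring_nf
  · funext x
    rw [natCast_two_mul_sub_one hn, kernelEigenvalue, fiberEigenvalue]
    push_cast
    ring
  · rw [radialBound, kernelLevel, natCast_two_mul_sub_one hn]
    push_cast
    ring
  · rfl

theorem IsJacobi.isBoundedODESolution_fiberFactor (hJ : IsJacobi J) (mk : ℕ × ℕ) :
    IsBoundedODESolution regularAngles (jacobiDrift 0 0) (fun _ => fiberEigenvalue mk)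
      (fiberBound mk) (fiberFactor J mk) := by
  have h := hJ.isBoundedODESolution mk.1 0 0
  simp only [jacobiSup, Nat.cast_zero, zero_add, add_zero, Nat.choose_self, max_self, Nat.cast_one,
    mul_one] at h
  exact h

theorem pow_le_exp_mul {s x : ℝ} (hs : 0 < s) (hx : 0 ≤ x) (j : ℕ) :
    x ^ j ≤ exp (j * (s⁻¹ + s * x)) := by
  rw [exp_nat_mul, exp_add]
  gcongr
  calc x = s⁻¹ * (s * x) := by field_simp
    _ ≤ exp s⁻¹ * exp (s * x) := by
      gcongr <;> linarith [add_one_le_exp s⁻¹, add_one_le_exp (s * x)]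

theorem summable_exp_neg_mul_add (ht : 0 < t) :
    Summable fun mk : ℕ × ℕ => exp (-t * (mk.1 + mk.2)) := by
  have hgeom : Summable fun k : ℕ => exp (k * -t) := summable_exp_nat_mul_iff.2 (by linarith)
  refine (hgeom.mul_of_nonneg hgeom (fun _ => exp_nonneg _) fun _ => exp_nonneg _).congr
    fun mk => ?_
  rw [← exp_add]
  ring_nf

theorem one_le_kernelLevel (n : ℕ) (mk : ℕ × ℕ) : 1 ≤ kernelLevel n mk := by
  rw [kernelLevel]
  exact le_add_of_nonneg_left (by positivity)

/-- The left-hand side is the exponent given by `pow_le_exp_mul` with `s = t / (P + 1)`: for this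
`s` the growth is at most `(1 + k) t N`, against `4 k t N` from the eigenvalue, where `N` is the
`kernelLevel`. -/
theorem kernelLevel_growth_sub_kernelEigenvalue_le (hn : 1 ≤ n) (P : ℕ) (ht : 0 < t)
    (mk : ℕ × ℕ) :
    (P + mk.2) * ((t / (P + 1))⁻¹ + t / (P + 1) * kernelLevel n mk) - kernelEigenvalue n mk * t ≤
      P * ((P + 1) / t) + t * (2 * n + 1) + ((P + 1) / t + 2 * t) ^ 2 / (12 * t) -
        t * (mk.1 + mk.2) := by
  obtain ⟨m, k⟩ := mk
  have hn' : (1 : ℝ) ≤ n := by exact_mod_cast hn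
  have hlinear : (P + k) * (t / (P + 1) * kernelLevel n (m, k)) ≤
      (1 + k) * (t * kernelLevel n (m, k)) := by
    have hlevel := zero_le_one.trans (one_le_kernelLevel n (m, k))
    have hratio : (P + k : ℝ) / (P + 1) ≤ 1 + k := by
      rw [div_le_iff₀ (by positivity)]
      have : (0 : ℝ) ≤ P * k + 1 := by positivity
      linarith
    calc (P + k) * (t / (P + 1) * kernelLevel n (m, k))
        = (P + k) / (P + 1) * (t * kernelLevel n (m, k)) := by ring
      _ ≤ (1 + k) * (t * kernelLevel n (m, k)) := by gcongr
  have hsquare : ((P + 1) / t + 2 * t) * k - 3 * t * k ^ 2 ≤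
      ((P + 1) / t + 2 * t) ^ 2 / (12 * t) := by
    rw [le_div_iff₀ (by positivity)]
    nlinarith [sq_nonneg ((P + 1) / t + 2 * t - 6 * t * k)]
  rw [inv_div]
  have : 0 ≤ t * k * (2 * m + 2 * n + 1) := by positivity
  have : 0 ≤ t * m * (n - 1) := mul_nonneg (by positivity) (by linarith)
  have : 0 ≤ t * m := by positivity
  simp only [kernelLevel, kernelEigenvalue] at hlinear ⊢
  linarith

theorem summable_kernelLevel_pow_mul_exp (hn : 1 ≤ n) (P : ℕ) (ht : 0 < t) :
    Summable fun mk => kernelLevel n mk ^ (P + mk.2) * exp (-kernelEigenvalue n mk * t) := by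
  have hlevel (mk : ℕ × ℕ) : 0 ≤ kernelLevel n mk := zero_le_one.trans (one_le_kernelLevel n mk)
  refine ((summable_exp_neg_mul_add ht).mul_left (exp (P * ((P + 1) / t) + t * (2 * n + 1) +
    ((P + 1) / t + 2 * t) ^ 2 / (12 * t)))).of_nonneg_of_le
    (fun mk => mul_nonneg (pow_nonneg (hlevel mk) _) (exp_nonneg _)) fun mk => ?_
  have hs : 0 < t / (P + 1) := by positivity
  calc kernelLevel n mk ^ (P + mk.2) * exp (-kernelEigenvalue n mk * t)
      ≤ exp ((P + mk.2 : ℕ) * ((t / (P + 1))⁻¹ + t / (P + 1) * kernelLevel n mk)) *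
          exp (-kernelEigenvalue n mk * t) := by
        gcongr
        exact pow_le_exp_mul hs (hlevel mk) _
    _ ≤ _ := by
        rw [← exp_add, ← exp_add, exp_le_exp]
        push_cast
        linarith [kernelLevel_growth_sub_kernelEigenvalue_le hn P ht mk]

theorem abs_kernelCoeff_le (n : ℕ) (mk : ℕ × ℕ) :
    |kernelCoeff n mk| ≤ |Real.Gamma (2 * n) / (4 * π ^ (2 * n + 2))| *
      (2 * kernelLevel n mk ^ (2 * n - 1 + 2)) := by
  have hchoose : ((mk.2 + 2 * mk.1 + 2 * n).choose (2 * n - 1) : ℝ) ≤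
      kernelLevel n mk ^ (2 * n - 1) := by
    refine (Nat.cast_le.2 (Nat.choose_le_pow _ _)).trans ?_
    have hbase : ((mk.2 + 2 * mk.1 + 2 * n : ℕ) : ℝ) ≤ kernelLevel n mk := by
      rw [kernelLevel]
      push_cast
      linarith
    push_cast at hbase ⊢
    gcongr
  rw [kernelCoeff, mul_assoc, mul_assoc, abs_mul, abs_of_nonneg (a := _ * (_ * _)) (by positivity)]
  refine mul_le_mul_of_nonneg_left ?_ (abs_nonneg _)
  calc (2 * mk.2 + 2 * mk.1 + 2 * n + 1 : ℝ) *
        ((2 * mk.1 + 1) * (mk.2 + 2 * mk.1 + 2 * n).choose (2 * n - 1))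
      ≤ 2 * kernelLevel n mk * (kernelLevel n mk * kernelLevel n mk ^ (2 * n - 1)) := by
        have := zero_le_one.trans (one_le_kernelLevel n mk)
        gcongr <;> simp only [kernelLevel] <;> linarith
    _ = 2 * kernelLevel n mk ^ (2 * n - 1 + 2) := by ring

theorem kernelEigenvalue_nonneg (n : ℕ) (mk : ℕ × ℕ) : 0 ≤ kernelEigenvalue n mk := by
  rw [kernelEigenvalue]
  positivity

theorem fiberEigenvalue_nonneg (mk : ℕ × ℕ) : 0 ≤ fiberEigenvalue mk := by
  rw [fiberEigenvalue]
  positivity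

theorem one_add_eigenvalues_le (n : ℕ) (mk : ℕ × ℕ) :
    1 + kernelEigenvalue n mk + fiberEigenvalue mk ≤ 6 * kernelLevel n mk ^ 2 := by
  obtain ⟨m, k⟩ := mk
  simp only [kernelEigenvalue, fiberEigenvalue, kernelLevel]
  have : (0 : ℝ) ≤ k * m + k * n + m * n + k + m + n + k ^ 2 + m ^ 2 + n ^ 2 := by positivity
  nlinarith

theorem jacobiSup_le_kernelLevel_pow (n : ℕ) (mk : ℕ × ℕ) :
    (jacobiSup mk.2 (2 * n - 1) (2 * mk.1 + 1) : ℝ) ≤ kernelLevel n mk ^ mk.2 := by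
  have hsup : jacobiSup mk.2 (2 * n - 1) (2 * mk.1 + 1) ≤ (mk.2 + 2 * mk.1 + 2 * n + 1) ^ mk.2 :=
    max_le ((Nat.choose_le_pow _ _).trans (Nat.pow_le_pow_left (by omega) _))
      ((Nat.choose_le_pow _ _).trans (Nat.pow_le_pow_left (by omega) _))
  rw [kernelLevel]
  exact_mod_cast hsup

theorem radialBound_mul_fiberBound_nonneg (n : ℕ) (mk : ℕ × ℕ) :
    0 ≤ radialBound n mk * fiberBound mk := by
  rw [radialBound, fiberBound, kernelLevel]
  positivity

theorem radialBound_mul_fiberBound_le (n : ℕ) (mk : ℕ × ℕ) :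
    radialBound n mk * fiberBound mk ≤ 4 * kernelLevel n mk ^ (3 + mk.2) := by
  have hlevel := zero_le_one.trans (one_le_kernelLevel n mk)
  have hm : 2 * (mk.1 : ℝ) + 1 ≤ kernelLevel n mk := by
    rw [kernelLevel]
    have : (0 : ℝ) ≤ mk.2 + 2 * n := by positivity
    linarith
  have hm' : (mk.1 : ℝ) + 1 ≤ kernelLevel n mk := le_trans (by linarith) hm
  calc radialBound n mk * fiberBound mk
      ≤ kernelLevel n mk * (2 * kernelLevel n mk * kernelLevel n mk ^ mk.2) *
          (2 * kernelLevel n mk) := by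
        rw [radialBound, fiberBound]
        gcongr
        exact jacobiSup_le_kernelLevel_pow n mk
    _ = 4 * kernelLevel n mk ^ (3 + mk.2) := by ring

theorem summable_kernel_majorant (hn : 1 ≤ n) (ht : 0 < t) :
    Summable fun mk => |kernelCoeff n mk| * exp (-kernelEigenvalue n mk * t) *
      ((1 + kernelEigenvalue n mk + fiberEigenvalue mk) * (radialBound n mk * fiberBound mk)) := by
  have hweight (mk : ℕ × ℕ) : 0 ≤ (1 + kernelEigenvalue n mk + fiberEigenvalue mk) *
      (radialBound n mk * fiberBound mk) :=
    mul_nonneg (by linarith [kernelEigenvalue_nonneg n mk, fiberEigenvalue_nonneg mk])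
      (radialBound_mul_fiberBound_nonneg n mk)
  refine ((summable_kernelLevel_pow_mul_exp hn (2 * n - 1 + 7) ht).mul_left
    (|Real.Gamma (2 * n) / (4 * π ^ (2 * n + 2))| * 48)).of_nonneg_of_le
    (fun mk => mul_nonneg (by positivity) (hweight mk)) fun mk => ?_
  have hlevel := zero_le_one.trans (one_le_kernelLevel n mk)
  calc |kernelCoeff n mk| * exp (-kernelEigenvalue n mk * t) *
        ((1 + kernelEigenvalue n mk + fiberEigenvalue mk) * (radialBound n mk * fiberBound mk))
      ≤ |Real.Gamma (2 * n) / (4 * π ^ (2 * n + 2))| * (2 * kernelLevel n mk ^ (2 * n - 1 + 2)) *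
          exp (-kernelEigenvalue n mk * t) *
            (6 * kernelLevel n mk ^ 2 * (4 * kernelLevel n mk ^ (3 + mk.2))) := by
        gcongr ?_ * _ * (?_ * ?_)
        · exact hweight mk
        · exact abs_kernelCoeff_le n mk
        · exact radialBound_mul_fiberBound_nonneg n mk
        · exact one_add_eigenvalues_le n mk
        · exact radialBound_mul_fiberBound_le n mk
    _ = _ := by ring

theorem IsJacobi.isSeparatedFamily (hJ : IsJacobi J) (hn : 1 ≤ n) :
    IsSeparatedFamily regularAngles regularAngles (jacobiDrift (2 * n - 1) 1)
      (fun x => tan x ^ 2) (jacobiDrift 0 0) (kernelCoeff n) (kernelEigenvalue n) fiberEigenvalue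
      (radialBound n) fiberBound (radialFactor n J) (fiberFactor J) where
  eigenvalue_nonneg := kernelEigenvalue_nonneg n
  fiberEigenvalue_nonneg := fiberEigenvalue_nonneg
  radial := hJ.isBoundedODESolution_radialFactor hn
  fiber := hJ.isBoundedODESolution_fiberFactor
  summable _ := summable_kernel_majorant hn

theorem IsJacobi.summable_abs_hTerm (hJ : IsJacobi J) (hn : 1 ≤ n) (ht : 0 < t) (r φ : ℝ) :
    Summable fun mk => |hTerm n J t r φ mk| := by
  simpa only [hTerm_eq] using (hJ.isSeparatedFamily hn).summable_abs ht r φ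

theorem IsJacobi.hKernel_heat_equation (hJ : IsJacobi J) (hn : 1 ≤ n) (ht : 0 < t)
    (hr : r ∈ regularAngles) (hφ : φ ∈ regularAngles) :
    deriv (fun s => hKernel n J s r φ) t =
      iteratedDeriv 2 (fun ρ => hKernel n J t ρ φ) r +
        ((4 * n - 1) * cot r - 3 * tan r) * deriv (fun ρ => hKernel n J t ρ φ) r +
        tan r ^ 2 * (iteratedDeriv 2 (fun ψ => hKernel n J t r ψ) φ +
          2 * cot (2 * φ) * deriv (fun ψ => hKernel n J t r ψ) φ) := by
  have hdrift : (4 * n - 1) * cot r - 3 * tan r = jacobiDrift (2 * n - 1) 1 r := by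
    rw [jacobiDrift]
    ring
  rw [hKernel_eq_separatedSeries, hdrift, ← jacobiDrift_zero_zero hφ]
  exact (hJ.isSeparatedFamily hn).heat_equation isOpen_regularAngles isOpen_regularAngles
    (continuousOn_jacobiDrift _ _) (continuousOn_tan_regularAngles.pow 2)
    (continuousOn_jacobiDrift _ _) ht hr hφ

theorem mem_regularAngles_of_mem_Ioo (hr : r ∈ Ioo 0 (π / 2)) : r ∈ regularAngles :=
  (sin_pos_of_pos_of_lt_pi (by linarith [hr.1]) (by linarith [hr.2])).ne'

end SubellipticHeatKernel

/-- absolute convergence of the double series defining the subelliptic heat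
kernel `h_t(r,φ)` on `CP^{2n+1}` and the subelliptic heat equation it satisfies. -/
theorem stmt_14 (n : ℕ) (hn : 1 ≤ n) (J : ℕ → ℕ → ℕ → ℝ → ℝ) (hJ : IsJacobi J) :
    (∀ t r φ : ℝ, 0 < t → r ∈ Set.Ico 0 (π / 2) → φ ∈ Set.Icc 0 (π / 2) →
      Summable (fun mk : ℕ × ℕ => |hTerm n J t r φ mk|)) ∧
    (∀ t r φ : ℝ, t ∈ Set.Ioi (0 : ℝ) → r ∈ Set.Ioo 0 (π / 2) → φ ∈ Set.Ioo 0 (π / 2) →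
      deriv (fun s => hKernel n J s r φ) t =
        iteratedDeriv 2 (fun ρ => hKernel n J t ρ φ) r +
          ((4 * (n : ℝ) - 1) * Real.cot r - 3 * Real.tan r) *
            deriv (fun ρ => hKernel n J t ρ φ) r +
          Real.tan r ^ 2 *
            (iteratedDeriv 2 (fun e => hKernel n J t r e) φ +
              2 * Real.cot (2 * φ) * deriv (fun e => hKernel n J t r e) φ)) := by
  exact ⟨fun t r φ ht _ _ => hJ.summable_abs_hTerm hn ht r φ, fun t r φ ht hr hφ =>
    hJ.hKernel_heat_equation hn ht (mem_regularAngles_of_mem_Ioo hr)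
      (mem_regularAngles_of_mem_Ioo hφ)⟩
end

section
/- For every integer n ≥ 1, every t > 0, r ∈ [0, π/2) and φ ∈ (0, π/2], one has h_t(r, φ) = (1/(2π))·∫_0^π p_t(r, arccos(cos φ·cos θ)) dθ, intertwining the subelliptic heat kernel h_t on CP^{2n+1} with the subelliptic heat kernel p_t of the quaternionic Hopf fibration on S^{4n+3}. -/
open Real MeasureTheory Filter Topology Set

/-!
Since `sin ((m + 1) η) / sin η = U_m (cos η)`, the kernel `p_t(r, ·)` is a series in the Chebyshev
polynomials `U_m (cos η)`. Averaging `U_m (cos φ cos θ)` over `θ ∈ [0, π]` gives `0` for odd `m`,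
by the symmetry `θ ↦ π - θ`, and `P_j (cos 2φ)` for `m = 2j`: the Wallis moments of `cos θ` turn the
coefficients of `U_{2j}` into those of the shifted Legendre polynomial in `cos² φ`. The surviving
coefficients are twice those of `h_t`. Sum and integral may be interchanged because `|U_m| ≤ m + 1`
and, by Vandermonde's identity, `|P_k^{(α,β)}| ≤ C(α + β + 2k, k)` on `[-1, 1]`; the quadratic
growth of the eigenvalues in `k` beats this binomial coefficient.
-/

section ChebyshevU

open Polynomial Finset.HasAntidiagonal

lemma chebyshevU_eq_sum_antidiagonal (R : Type*) [CommRing R] (n : ℕ) :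
    Chebyshev.U R n = ∑ p ∈ antidiagonal n,
      (-1) ^ p.1 * (p.2.choose p.1 : R[X]) * (2 * X) ^ (p.2 - p.1) := by
  induction n using Nat.twoStepInduction with
  | zero => simp
  | one => simp [Finset.Nat.antidiagonal_succ]
  | more n ih_n ih_succ =>
    have pascal (p : ℕ × ℕ) :
        (-1) ^ (p.1 + 1) * ((p.2 + 1).choose (p.1 + 1) : R[X]) * (2 * X) ^ (p.2 + 1 - (p.1 + 1)) =
          2 * X * ((-1) ^ (p.1 + 1) * (p.2.choose (p.1 + 1) : R[X]) *
            (2 * X) ^ (p.2 - (p.1 + 1))) -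
          (-1) ^ p.1 * (p.2.choose p.1 : R[X]) * (2 * X) ^ (p.2 - p.1) := by
      rw [Nat.choose_succ_succ, Nat.add_sub_add_right]
      rcases lt_or_ge p.1 p.2 with hlt | hle
      · rw [show p.2 - p.1 = p.2 - (p.1 + 1) + 1 by lia]
        push_cast
        ring
      · rw [Nat.choose_eq_zero_of_lt (by lia : p.2 < p.1 + 1)]
        push_cast
        ring
    push_cast at ih_succ ⊢
    rw [Chebyshev.U_add_two, ih_succ, ih_n, Finset.Nat.antidiagonal_succ_succ',
      Finset.Nat.antidiagonal_succ]
    simp only [Finset.sum_cons, Finset.sum_map, Function.Embedding.prodMap,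
      Function.Embedding.coeFn_mk, Prod.map, Nat.succ_eq_add_one, Function.Embedding.refl_apply,
      pascal, Finset.sum_sub_distrib, mul_add, Finset.mul_sum]
    simp only [pow_zero, Nat.choose_zero_right, Nat.cast_one, mul_one, tsub_zero, one_mul,
      Nat.choose_zero_succ, Nat.cast_zero, mul_zero, zero_tsub, zero_add]
    ring

lemma chebyshevU_two_mul_eq_sum_range (R : Type*) [CommRing R] (m : ℕ) :
    Chebyshev.U R ((2 * m : ℕ) : ℤ) = ∑ i ∈ Finset.range (m + 1),
      (-1) ^ (m + i) * ((m + i).choose (2 * i) : R[X]) * (2 * X) ^ (2 * i) := by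
  rw [chebyshevU_eq_sum_antidiagonal, Finset.Nat.sum_antidiagonal_eq_sum_range_succ_mk,
    ← Finset.sum_subset (Finset.range_mono (by lia : m + 1 ≤ 2 * m + 1)),
    ← Finset.sum_range_reflect]
  · refine Finset.sum_congr rfl fun i hi ↦ ?_
    obtain ⟨d, rfl⟩ := Nat.exists_eq_add_of_le (Finset.mem_range_succ_iff.mp hi)
    rw [show i + d + 1 - 1 - i = d by lia, show 2 * (i + d) - d = i + d + i by lia,
      show i + d + i - d = 2 * i by lia, show i + d + i = d + 2 * i by lia,
      Nat.choose_symm_add, pow_add, pow_mul]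
    simp
  · intro i _ hi
    rw [Finset.mem_range, not_lt] at hi
    simp [Nat.choose_eq_zero_of_lt (by lia : 2 * m - i < i)]

lemma abs_eval_chebyshevU_le (m : ℕ) {x : ℝ} (hx : |x| ≤ 1) :
    |(Chebyshev.U ℝ m).eval x| ≤ m + 1 := by
  induction m with
  | zero => simp
  | succ m ih =>
    push_cast
    rw [Chebyshev.U_eq_X_mul_U_add_T, eval_add, eval_mul, eval_X]
    calc |x * (Chebyshev.U ℝ m).eval x + (Chebyshev.T ℝ (m + 1)).eval x|
        ≤ |x| * |(Chebyshev.U ℝ m).eval x| + |(Chebyshev.T ℝ (m + 1)).eval x| := by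
          rw [← abs_mul]; exact abs_add_le _ _
      _ ≤ 1 * (m + 1) + 1 := by
          gcongr
          exact Chebyshev.abs_eval_T_real_le_one _ hx
      _ = m + 1 + 1 := by rw [one_mul]

lemma vertFactor_arccos (m : ℕ) {y : ℝ} (hy : |y| < 1) :
    vertFactor m (arccos y) = (Chebyshev.U ℝ m).eval y := by
  obtain ⟨hy_neg, hy_pos⟩ := abs_lt.mp hy
  have arccos_pos : 0 < arccos y := arccos_pos.mpr hy_pos
  have sin_pos : 0 < sin (arccos y) :=
    sin_pos_of_pos_of_lt_pi arccos_pos (arccos_lt_pi.mpr hy_neg)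
  have hU := Chebyshev.U_real_cos (arccos y) m
  rw [cos_arccos hy_neg.le hy_pos.le] at hU
  rw [vertFactor, if_neg arccos_pos.ne', div_eq_iff sin_pos.ne', hU, Int.cast_natCast]

end ChebyshevU

section LegendreIntegral

open Polynomial

lemma integral_cos_pow_two_mul (i : ℕ) :
    ∫ θ in (0 : ℝ)..π, cos θ ^ (2 * i) = π * i.centralBinom / 4 ^ i := by
  induction i with
  | zero => simp
  | succ i ih =>
    have central_succ :
        ((i : ℝ) + 1) * (i + 1).centralBinom = 2 * (2 * i + 1) * i.centralBinom := by
      exact_mod_cast Nat.succ_mul_centralBinom_succ i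
    rw [mul_add_one, integral_cos_pow, ih, sin_pi, sin_zero]
    field_simp
    push_cast
    linear_combination (-2 * π * 4 ^ i) * central_succ

lemma choose_add_two_mul_mul_centralBinom (m i : ℕ) :
    (m + i).choose (2 * i) * i.centralBinom = m.choose i * (m + i).choose m := by
  rw [Nat.centralBinom, Nat.choose_mul (by lia), Nat.add_sub_cancel, two_mul, Nat.add_sub_cancel,
    mul_comm, Nat.choose_symm_add]

lemma aeval_shiftedLegendre (m : ℕ) (y : ℝ) :
    aeval y (shiftedLegendre m) = ∑ i ∈ Finset.range (m + 1),
      (-1) ^ i * (m.choose i : ℝ) * ((m + i).choose m : ℝ) * y ^ i := by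
  simp [shiftedLegendre]

lemma integral_eval_chebyshevU_two_mul (m : ℕ) (c : ℝ) :
    ∫ θ in (0 : ℝ)..π, (Chebyshev.U ℝ ((2 * m : ℕ) : ℤ)).eval (c * cos θ) =
      π * ((-1) ^ m * aeval (c ^ 2) (shiftedLegendre m)) := by
  have expand (θ : ℝ) : (Chebyshev.U ℝ ((2 * m : ℕ) : ℤ)).eval (c * cos θ) =
      ∑ i ∈ Finset.range (m + 1),
        (-1) ^ (m + i) * ((m + i).choose (2 * i) : ℝ) * (4 ^ i * (c ^ 2) ^ i) *
          cos θ ^ (2 * i) := by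
    simp only [chebyshevU_two_mul_eq_sum_range, eval_finsetSum, eval_mul, eval_pow, eval_neg,
      eval_one, eval_natCast, eval_ofNat, eval_X, mul_pow, pow_mul]
    exact Finset.sum_congr rfl fun i _ ↦ by norm_num; ring
  have integral_term (i : ℕ) :
      ∫ θ in (0 : ℝ)..π, (-1) ^ (m + i) * ((m + i).choose (2 * i) : ℝ) * (4 ^ i * (c ^ 2) ^ i) *
          cos θ ^ (2 * i) =
        π * ((-1) ^ m * ((-1) ^ i * (m.choose i : ℝ) * ((m + i).choose m : ℝ) * (c ^ 2) ^ i)) := by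
    have choose_identity : ((m + i).choose (2 * i) : ℝ) * i.centralBinom =
        m.choose i * (m + i).choose m := by
      exact_mod_cast choose_add_two_mul_mul_centralBinom m i
    rw [intervalIntegral.integral_const_mul, integral_cos_pow_two_mul]
    field_simp
    linear_combination (c ^ 2) ^ i * (-1) ^ (m + i) * choose_identity
  simp_rw [expand]
  rw [intervalIntegral.integral_finsetSum
    fun i _ ↦ Continuous.intervalIntegrable (by fun_prop) _ _]
  simp_rw [integral_term, aeval_shiftedLegendre, Finset.mul_sum]

lemma integral_eval_chebyshevU_two_mul_add_one (m : ℕ) (c : ℝ) :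
    ∫ θ in (0 : ℝ)..π, (Chebyshev.U ℝ ((2 * m + 1 : ℕ) : ℤ)).eval (c * cos θ) = 0 := by
  have parity (x : ℝ) : (Chebyshev.U ℝ ((2 * m + 1 : ℕ) : ℤ)).eval (-x) =
      -(Chebyshev.U ℝ ((2 * m + 1 : ℕ) : ℤ)).eval x := by
    rw [Chebyshev.U_eval_neg, Int.negOnePow_odd _ ⟨m, by push_cast; rfl⟩]
    simp
  have reflect := intervalIntegral.integral_comp_sub_left (a := 0) (b := π)
    (fun θ ↦ (Chebyshev.U ℝ ((2 * m + 1 : ℕ) : ℤ)).eval (c * cos θ)) π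
  simp only [cos_pi_sub, mul_neg, parity, intervalIntegral.integral_neg, sub_self, sub_zero]
    at reflect
  exact self_eq_neg.mp reflect.symm

end LegendreIntegral

section Jacobi

open Polynomial Finset.HasAntidiagonal

lemma iteratedDeriv_one_sub_pow (a i : ℕ) (x : ℝ) :
    iteratedDeriv i (fun y : ℝ ↦ (1 - y) ^ a) x =
      (-1) ^ i * (a.descFactorial i * (1 - x) ^ (a - i)) := by
  simp [iteratedDeriv_comp_const_sub i (fun y : ℝ ↦ y ^ a) 1]

lemma iteratedDeriv_one_add_pow (a i : ℕ) (x : ℝ) :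
    iteratedDeriv i (fun y : ℝ ↦ (1 + y) ^ a) x = a.descFactorial i * (1 + x) ^ (a - i) := by
  simp [iteratedDeriv_comp_const_add i (fun y : ℝ ↦ y ^ a) 1]

lemma jacobiFormula_eq_sum_antidiagonal (k α β : ℕ) {x : ℝ} (hx : x ∈ Ioo (-1 : ℝ) 1) :
    jacobiFormula k α β x = ∑ p ∈ antidiagonal k,
      ((α + k).choose p.1 * (β + k).choose p.2 : ℝ) *
        (((x - 1) / 2) ^ p.2 * ((x + 1) / 2) ^ p.1) := by
  have one_sub_pos : 0 < 1 - x := by linarith [hx.2]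
  have one_add_pos : 0 < 1 + x := by linarith [hx.1]
  rw [jacobiFormula, iteratedDeriv_fun_mul (by fun_prop) (by fun_prop),
    ← Finset.Nat.sum_antidiagonal_eq_sum_range_succ fun i j ↦
      (k.choose i : ℝ) * iteratedDeriv i (fun y : ℝ ↦ (1 - y) ^ (α + k)) x *
        iteratedDeriv j (fun y : ℝ ↦ (1 + y) ^ (β + k)) x, Finset.mul_sum]
  refine Finset.sum_congr rfl fun ⟨i, j⟩ hij ↦ ?_
  obtain rfl : i + j = k := mem_antidiagonal.mp hij
  have choose_factorial : ((i + j).choose i : ℝ) * (i.factorial * j.factorial) =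
      (i + j).factorial := by
    rw [← mul_assoc, Nat.choose_symm_add]
    exact_mod_cast Nat.add_choose_mul_factorial_mul_factorial i j
  rw [iteratedDeriv_one_sub_pow, iteratedDeriv_one_add_pow,
    Nat.descFactorial_eq_factorial_mul_choose, Nat.descFactorial_eq_factorial_mul_choose,
    show α + (i + j) - i = α + j by lia, show β + (i + j) - j = β + i by lia,
    ← choose_factorial, show x - 1 = -1 * (1 - x) by ring, add_comm x 1]
  have choose_ne_zero : ((i + j).choose i : ℝ) ≠ 0 := by
    exact_mod_cast (Nat.choose_pos (Nat.le_add_right i j)).ne'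
  have sign : ((-1 : ℝ) ^ i) ^ 2 = 1 := by rw [← pow_mul, pow_mul', neg_one_sq, one_pow]
  simp only [zpow_neg, zpow_natCast, div_pow, mul_pow, pow_add, Nat.cast_mul]
  field_simp
  rw [sign, one_mul]

lemma iteratedDeriv_aeval {R 𝕜 : Type*} [NontriviallyNormedField 𝕜] [CommSemiring R] [Algebra R 𝕜]
    (p : R[X]) (k : ℕ) :
    iteratedDeriv k (fun x : 𝕜 ↦ aeval x p) = fun x ↦ aeval x (derivative^[k] p) := by
  induction k with
  | zero => simp
  | succ k ih =>
    funext x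
    rw [iteratedDeriv_succ, ih, Polynomial.deriv_aeval, Function.iterate_succ_apply']

lemma iteratedDeriv_comp_two_mul_sub_one {f : ℝ → ℝ} {m : ℕ} (hf : ContDiff ℝ m f) (y : ℝ) :
    iteratedDeriv m (fun z ↦ f (2 * z - 1)) y = 2 ^ m * iteratedDeriv m f (2 * y - 1) := by
  rw [iteratedDeriv_comp_const_mul (f := fun z ↦ f (z - 1)) (by fun_prop),
    iteratedDeriv_comp_sub_const]

lemma two_pow_mul_iteratedDeriv_eq_shiftedLegendre (m : ℕ) (y : ℝ) :
    2 ^ m * iteratedDeriv m (fun z : ℝ ↦ (1 - z) ^ m * (1 + z) ^ m) (2 * y - 1) =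
      4 ^ m * (m.factorial * aeval y (shiftedLegendre m)) := by
  have substitute (z : ℝ) : (1 - (2 * z - 1)) ^ m * (1 + (2 * z - 1)) ^ m =
      4 ^ m * aeval z (X ^ m * (1 - X) ^ m : ℤ[X]) := by
    simp only [map_mul, map_pow, map_sub, map_one, aeval_X, ← mul_pow]
    ring
  rw [← iteratedDeriv_comp_two_mul_sub_one (by fun_prop)]
  simp only [substitute]
  rw [iteratedDeriv_const_mul_field, iteratedDeriv_aeval, ← factorial_mul_shiftedLegendre_eq]
  simp only [map_mul, map_natCast]

lemma jacobiFormula_zero_zero (m : ℕ) (y : ℝ) :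
    jacobiFormula m 0 0 (2 * y - 1) = (-1) ^ m * aeval y (shiftedLegendre m) := by
  have rodrigues := two_pow_mul_iteratedDeriv_eq_shiftedLegendre m y
  have four_pow : (4 : ℝ) ^ m = 2 ^ m * 2 ^ m := by rw [← mul_pow]; norm_num
  rw [four_pow, mul_assoc, mul_right_inj' (by positivity)] at rodrigues
  simp only [jacobiFormula, zero_add, rodrigues, Nat.cast_zero, neg_zero, zpow_zero, mul_one]
  field_simp

namespace IsJacobi

variable {J : ℕ → ℕ → ℕ → ℝ → ℝ}

lemma eq_eval_of_jacobiFormula_eq (hJ : IsJacobi J) {k α β : ℕ} {q : ℝ[X]}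
    (hq : ∀ x ∈ Ioo (-1 : ℝ) 1, jacobiFormula k α β x = q.eval x) (x : ℝ) :
    J k α β x = q.eval x := by
  obtain ⟨⟨p, hp⟩, hformula⟩ := hJ k α β
  have agree : Ioo (-1 : ℝ) 1 ⊆ {x | p.eval x = q.eval x} := fun x hx ↦ by
    rw [mem_ofPred_eq, ← hp, hformula x hx, hq x hx]
  rw [hp, eq_of_infinite_eval_eq p q ((Ioo_infinite (by norm_num)).mono agree)]

lemma eq_sum_antidiagonal (hJ : IsJacobi J) (k α β : ℕ) (x : ℝ) :
    J k α β x = ∑ p ∈ antidiagonal k, ((α + k).choose p.1 * (β + k).choose p.2 : ℝ) *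
      (((x - 1) / 2) ^ p.2 * ((x + 1) / 2) ^ p.1) := by
  let q : ℝ[X] := ∑ p ∈ antidiagonal k, ((α + k).choose p.1 * (β + k).choose p.2 : ℝ[X]) *
    ((C 2⁻¹ * (X - 1)) ^ p.2 * (C 2⁻¹ * (X + 1)) ^ p.1)
  have eval_q (x : ℝ) : q.eval x = ∑ p ∈ antidiagonal k,
      ((α + k).choose p.1 * (β + k).choose p.2 : ℝ) *
        (((x - 1) / 2) ^ p.2 * ((x + 1) / 2) ^ p.1) := by
    simp [q, eval_finsetSum, div_eq_inv_mul]
  rw [← eval_q]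
  exact hJ.eq_eval_of_jacobiFormula_eq
    (fun x hx ↦ by rw [jacobiFormula_eq_sum_antidiagonal k α β hx, eval_q]) x

lemma abs_le_choose (hJ : IsJacobi J) (k α β : ℕ) {x : ℝ} (hx : |x| ≤ 1) :
    |J k α β x| ≤ (α + β + 2 * k).choose k := by
  obtain ⟨hx_neg, hx_pos⟩ := abs_le.mp hx
  have abs_half_sub_le : |(x - 1) / 2| ≤ 1 := abs_le.mpr ⟨by linarith, by linarith⟩
  have abs_half_add_le : |(x + 1) / 2| ≤ 1 := abs_le.mpr ⟨by linarith, by linarith⟩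
  calc |J k α β x|
      ≤ ∑ p ∈ antidiagonal k, |((α + k).choose p.1 * (β + k).choose p.2 : ℝ) *
          (((x - 1) / 2) ^ p.2 * ((x + 1) / 2) ^ p.1)| := by
        rw [hJ.eq_sum_antidiagonal]
        exact Finset.abs_sum_le_sum_abs _ _
    _ ≤ ∑ p ∈ antidiagonal k, ((α + k).choose p.1 * (β + k).choose p.2 : ℝ) * (1 * 1) := by
        simp only [abs_mul, abs_pow, Nat.abs_cast]
        gcongr <;> exact pow_le_one₀ (abs_nonneg _) ‹_›
    _ = (α + β + 2 * k).choose k := by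
        rw [show α + β + 2 * k = (α + k) + (β + k) by ring, Nat.add_choose_eq]
        push_cast
        simp

lemma zero_zero_two_mul_sub_one (hJ : IsJacobi J) (m : ℕ) (y : ℝ) :
    J m 0 0 (2 * y - 1) = (-1) ^ m * aeval y (shiftedLegendre m) := by
  let q : ℝ[X] := C ((-1) ^ m) *
    ((shiftedLegendre m).map (Int.castRingHom ℝ)).comp (C 2⁻¹ * (X + 1))
  have eval_q (y : ℝ) : q.eval (2 * y - 1) = (-1) ^ m * aeval y (shiftedLegendre m) := by
    simp [q, aeval_def, eval₂_eq_eval_map]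
  have formula_eq_eval (x : ℝ) : jacobiFormula m 0 0 x = q.eval x := by
    obtain ⟨y, rfl⟩ : ∃ y, 2 * y - 1 = x := ⟨(x + 1) / 2, by ring⟩
    rw [jacobiFormula_zero_zero, eval_q]
  rw [hJ.eq_eval_of_jacobiFormula_eq fun x _ ↦ formula_eq_eval x, eval_q]

end IsJacobi

end Jacobi

section Summability

lemma summable_natCast_add_one_pow_mul_exp (N : ℕ) {s : ℝ} (hs : 0 < s) :
    Summable fun m : ℕ ↦ ((m : ℝ) + 1) ^ N * exp (-s * m) := by
  have shifted := (summable_nat_add_iff 1).mpr (summable_pow_mul_exp_neg_nat_mul N hs)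
  refine (shifted.mul_left (exp s)).congr fun m ↦ ?_
  rw [mul_left_comm, ← exp_add]
  push_cast
  ring_nf

lemma tendsto_fst_add_snd_cofinite :
    Tendsto (fun p : ℕ × ℕ ↦ p.1 + p.2) cofinite atTop := by
  rw [← coprod_cofinite, Nat.cofinite_eq_atTop, Filter.coprod, tendsto_sup]
  exact ⟨tendsto_atTop_mono (fun p ↦ Nat.le_add_right p.1 p.2) tendsto_comap,
    tendsto_atTop_mono (fun p ↦ Nat.le_add_left p.2 p.1) tendsto_comap⟩

lemma summable_pow_add_mul_exp_neg_add (N : ℕ) {s : ℝ} (hs : 0 < s) :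
    Summable fun p : ℕ × ℕ ↦ ((p.1 + p.2 + 1 : ℝ)) ^ N * exp (-s * (p.1 + p.2)) := by
  have hsum := summable_natCast_add_one_pow_mul_exp N hs
  refine .of_nonneg_of_le (fun p ↦ by positivity) (fun p ↦ ?_)
    (hsum.mul_of_nonneg hsum (fun m ↦ by positivity) (fun k ↦ by positivity))
  calc ((p.1 + p.2 + 1 : ℝ)) ^ N * exp (-s * (p.1 + p.2))
      ≤ (((p.1 : ℝ) + 1) * (p.2 + 1)) ^ N * exp (-s * (p.1 + p.2)) := by
        gcongr
        nlinarith [(by positivity : (0 : ℝ) ≤ p.1 * p.2)]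
    _ = _ := by
        rw [mul_add (-s), exp_add, mul_pow]
        ring

/-- Since `k² + km + m = k(m + k) + m`, each of the `k` extra factors `c(m + k + 1)` is paired with
`exp (-s(m + k))`, and this product is at most `exp (-s)` once `m + k` is large. -/
lemma summable_pow_add_mul_exp_neg_quadratic (N : ℕ) {c s : ℝ} (hc : 0 ≤ c) (hs : 0 < s) :
    Summable fun p : ℕ × ℕ ↦
      (c * (p.1 + p.2 + 1)) ^ (N + p.2) * exp (-s * (p.2 * (p.1 + p.2) + p.1)) := by
  have factor_tendsto :
      Tendsto (fun j : ℕ ↦ c * (((j : ℝ) + 1) ^ 1 * exp (-s * j))) atTop (𝓝 0) :=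
    ((summable_natCast_add_one_pow_mul_exp 1 hs).mul_left c).tendsto_atTop_zero
  refine .of_norm_bounded_eventually
    ((summable_pow_add_mul_exp_neg_add N hs).mul_left (c ^ N)) ?_
  filter_upwards [tendsto_fst_add_snd_cofinite.eventually
    (factor_tendsto.eventually_le_const (exp_pos (-s)))] with ⟨m, k⟩ factor_le
  rw [norm_of_nonneg (by positivity)]
  push_cast [pow_one, ← mul_assoc] at factor_le ⊢
  have exp_split : exp (-s * (k * (m + k) + m)) = exp (-s * (m + k)) ^ k * exp (-s * m) := by
    rw [← exp_nat_mul, ← exp_add]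
    ring_nf
  calc (c * (m + k + 1 : ℝ)) ^ (N + k) * exp (-s * (k * (m + k) + m))
      = (c * (m + k + 1)) ^ N * (c * (m + k + 1) * exp (-s * (m + k))) ^ k * exp (-s * m) := by
        rw [exp_split, pow_add, mul_pow _ (exp _)]
        ring
    _ ≤ (c * (m + k + 1)) ^ N * exp (-s) ^ k * exp (-s * m) := by gcongr
    _ = c ^ N * (m + k + 1) ^ N * exp (-s * (m + k)) := by
        rw [mul_pow, ← exp_nat_mul, mul_assoc (_ * _), ← exp_add]
        ring_nf

end Summability

section Series

open Polynomial

lemma integral_tsum_mul_eval_chebyshevU {ι : Type*} [Countable ι] {a : ι → ℝ} {d : ι → ℕ}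
    (ha : Summable fun i ↦ |a i| * (d i + 1)) {c : ℝ} (hc : |c| ≤ 1) :
    ∫ θ in (0 : ℝ)..π, ∑' i, a i * (Chebyshev.U ℝ (d i)).eval (c * cos θ) =
      ∑' i, a i * ∫ θ in (0 : ℝ)..π, (Chebyshev.U ℝ (d i)).eval (c * cos θ) := by
  let F (i : ι) : C(ℝ, ℝ) :=
    ⟨fun θ ↦ a i * (Chebyshev.U ℝ (d i)).eval (c * cos θ), by fun_prop⟩
  have norm_F_le (i : ι) (θ : ℝ) : ‖F i θ‖ ≤ |a i| * (d i + 1) := by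
    have arg_le : |c * cos θ| ≤ 1 := by
      rw [abs_mul]
      exact mul_le_one₀ hc (abs_nonneg _) (abs_cos_le_one θ)
    rw [norm_eq_abs, ContinuousMap.coe_mk, abs_mul]
    gcongr
    exact abs_eval_chebyshevU_le (d i) arg_le
  have interchange := intervalIntegral.tsum_intervalIntegral_eq_of_summable_norm
    (a := 0) (b := π) (f := F) <| .of_nonneg_of_le (fun _ ↦ norm_nonneg _)
      (fun i ↦ (ContinuousMap.norm_le _ (by positivity)).mpr fun θ ↦ norm_F_le i θ) ha
  simp only [F, ContinuousMap.coe_mk, intervalIntegral.integral_const_mul] at interchange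
  exact interchange.symm

lemma tsum_prod_eq_tsum_two_mul {ι M : Type*} [AddCommMonoid M] [TopologicalSpace M]
    {b : ℕ × ι → M} (hb : ∀ m i, b (2 * m + 1, i) = 0) :
    ∑' p : ℕ × ι, b p = ∑' p : ℕ × ι, b (2 * p.1, p.2) := by
  have double_injective : Function.Injective fun p : ℕ × ι ↦ (2 * p.1, p.2) :=
    (mul_right_injective₀ two_ne_zero).prodMap Function.injective_id
  refine (double_injective.tsum_eq fun ⟨m, i⟩ hmi ↦ ?_).symm
  obtain ⟨j, rfl | rfl⟩ := m.even_or_odd'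
  · exact ⟨(j, i), rfl⟩
  · exact absurd (hb j i) hmi

end Series

section Kernels

open Polynomial

/-- The coefficient of `sin ((m + 1) η) / sin η` in the `(m, k)` term of the series for the
quaternionic Hopf heat kernel: everything in `pTerm` that does not depend on `η`. -/
noncomputable def pCoeff (n : ℕ) (J : ℕ → ℕ → ℕ → ℝ → ℝ) (t r : ℝ) (mk : ℕ × ℕ) : ℝ :=
  Gamma (2 * n) / (2 * π ^ (2 * n + 2)) * (2 * (mk.2 : ℝ) + mk.1 + 2 * n + 1) *
    ((mk.1 : ℝ) + 1) * ((mk.2 + mk.1 + 2 * n).choose (2 * n - 1) : ℝ) *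
    exp (-(4 * ((mk.2 : ℝ) * (mk.2 + 2 * n + mk.1 + 1) + n * mk.1)) * t) *
    cos r ^ mk.1 * J mk.2 (2 * n - 1) (mk.1 + 1) (cos (2 * r))

variable (n : ℕ) (J : ℕ → ℕ → ℕ → ℝ → ℝ) (t r : ℝ)

lemma pTerm_eq_pCoeff_mul (η : ℝ) (mk : ℕ × ℕ) :
    pTerm n J t r η mk = pCoeff n J t r mk * vertFactor mk.1 η := by
  rw [pTerm, pCoeff]
  ring

lemma hTerm_eq_pCoeff_mul (φ : ℝ) (mk : ℕ × ℕ) :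
    hTerm n J t r φ mk = pCoeff n J t r (2 * mk.1, mk.2) / 2 * J mk.1 0 0 (cos (2 * φ)) := by
  rw [hTerm, pCoeff]
  push_cast
  ring_nf

lemma pKernel_arccos {y : ℝ} (hy : |y| < 1) :
    pKernel n J t r (arccos y) =
      ∑' mk : ℕ × ℕ, pCoeff n J t r mk * (Chebyshev.U ℝ mk.1).eval y :=
  tsum_congr fun mk ↦ by rw [pTerm_eq_pCoeff_mul, vertFactor_arccos mk.1 hy]

lemma integral_pKernel_arccos (φ : ℝ) :
    ∫ θ in (0 : ℝ)..π, pKernel n J t r (arccos (cos φ * cos θ)) =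
      ∫ θ in (0 : ℝ)..π, ∑' mk : ℕ × ℕ,
        pCoeff n J t r mk * (Chebyshev.U ℝ mk.1).eval (cos φ * cos θ) := by
  refine intervalIntegral.integral_congr_Ioo_of_le pi_nonneg fun θ hθ ↦ pKernel_arccos n J t r ?_
  have cos_lt : |cos θ| < 1 := by
    rw [abs_lt, ← cos_pi, ← cos_zero]
    exact ⟨cos_lt_cos_of_nonneg_of_le_pi hθ.1.le le_rfl hθ.2,
      cos_lt_cos_of_nonneg_of_le_pi le_rfl hθ.2.le hθ.1⟩
  rw [abs_mul]
  exact mul_lt_one_of_nonneg_of_lt_one_right (abs_cos_le_one φ) (abs_nonneg _) cos_lt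

variable {n J t}

lemma two_mul_add_le_mul_add_one (hn : 1 ≤ n) (m k : ℕ) :
    2 * k + m + 2 * n + 1 ≤ (2 * n + 1) * (m + k + 1) := by
  nlinarith [Nat.zero_le (n * m), Nat.mul_le_mul_right k hn]

lemma choose_le_mul_add_one_pow (hn : 1 ≤ n) {m k N : ℕ} (hN : N ≤ 2 * k + m + 2 * n + 1)
    (j : ℕ) : (N.choose j : ℝ) ≤ ((2 * n + 1) * (m + k + 1)) ^ j := by
  exact_mod_cast (Nat.choose_le_pow N j).trans
    (Nat.pow_le_pow_left (hN.trans (two_mul_add_le_mul_add_one hn m k)) j)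

lemma exp_neg_eigenvalue_mul_le (hn : 1 ≤ n) (ht : 0 ≤ t) (m k : ℕ) :
    exp (-(4 * ((k : ℝ) * (k + 2 * n + m + 1) + n * m)) * t) ≤
      exp (-(4 * t) * (k * (m + k) + m)) := by
  have n_sub_one_nonneg : (0 : ℝ) ≤ n - 1 := sub_nonneg.mpr (by exact_mod_cast hn)
  have excess_nonneg : 0 ≤ t * (k * (2 * n + 1) + (n - 1) * m) := by positivity
  exact exp_le_exp.mpr (by linarith)

lemma abs_pCoeff_mul_le (hn : 1 ≤ n) (hJ : IsJacobi J) (ht : 0 ≤ t) (m k : ℕ) :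
    |pCoeff n J t r (m, k)| * (m + 1) ≤ Gamma (2 * n) / (2 * π ^ (2 * n + 2)) *
      (((2 * n + 1 : ℝ) * (m + k + 1)) ^ (2 * n + 2 + k) *
        exp (-(4 * t) * (k * (m + k) + m))) := by
  have weight_le : 2 * (k : ℝ) + m + 2 * n + 1 ≤ (2 * n + 1) * (m + k + 1) := by
    exact_mod_cast two_mul_add_le_mul_add_one hn m k
  set A : ℝ := (2 * n + 1) * (m + k + 1)
  have const_nonneg : 0 ≤ Gamma (2 * n) / (2 * π ^ (2 * n + 2)) := by
    have := Gamma_nonneg_of_nonneg (by positivity : (0 : ℝ) ≤ 2 * n)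
    positivity
  have m_le : (m : ℝ) + 1 ≤ A := by linarith [(k.cast_nonneg : (0 : ℝ) ≤ k)]
  have choose_le : ((k + m + 2 * n).choose (2 * n - 1) : ℝ) ≤ A ^ (2 * n - 1) :=
    choose_le_mul_add_one_pow hn (by lia) _
  have jacobi_le : |J k (2 * n - 1) (m + 1) (cos (2 * r))| ≤ A ^ k :=
    (hJ.abs_le_choose k _ _ (abs_cos_le_one _)).trans (choose_le_mul_add_one_pow hn (by lia) k)
  have cos_pow_le : |cos r| ^ m ≤ 1 := pow_le_one₀ (abs_nonneg _) (abs_cos_le_one r)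
  have exp_le := exp_neg_eigenvalue_mul_le hn ht m k
  rw [pCoeff]
  simp only [abs_mul, abs_of_nonneg const_nonneg, abs_exp, Nat.abs_cast, abs_pow,
    abs_of_nonneg (by positivity : 0 ≤ 2 * (k : ℝ) + m + 2 * n + 1),
    abs_of_nonneg (by positivity : 0 ≤ (m : ℝ) + 1)]
  calc _ ≤ Gamma (2 * n) / (2 * π ^ (2 * n + 2)) * A * A * A ^ (2 * n - 1) *
        exp (-(4 * t) * (k * (m + k) + m)) * 1 * A ^ k * A := by gcongr
    _ = _ := by
        rw [show 2 * n + 2 + k = 2 * n - 1 + 3 + k by lia]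
        ring

lemma summable_abs_pCoeff_mul (hn : 1 ≤ n) (hJ : IsJacobi J) (ht : 0 < t) :
    Summable fun mk : ℕ × ℕ ↦ |pCoeff n J t r mk| * (mk.1 + 1) :=
  .of_nonneg_of_le (fun mk ↦ by positivity)
    (fun mk ↦ abs_pCoeff_mul_le r hn hJ ht.le mk.1 mk.2)
    ((summable_pow_add_mul_exp_neg_quadratic (2 * n + 2) (by positivity)
      (by positivity : 0 < 4 * t)).mul_left _)

end Kernels

theorem stmt_15_general (n : ℕ) (hn : 1 ≤ n) (J : ℕ → ℕ → ℕ → ℝ → ℝ) (hJ : IsJacobi J)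
    (t r φ : ℝ) (ht : 0 < t) :
    hKernel n J t r φ =
      (1 / (2 * π)) * ∫ θ in (0 : ℝ)..π, pKernel n J t r (arccos (cos φ * cos θ)) := by
  have even_term (mk : ℕ × ℕ) : hTerm n J t r φ mk = 1 / (2 * π) *
      (pCoeff n J t r (2 * mk.1, mk.2) * ∫ θ in (0 : ℝ)..π,
        (Polynomial.Chebyshev.U ℝ ((2 * mk.1 : ℕ) : ℤ)).eval (cos φ * cos θ)) := by
    rw [integral_eval_chebyshevU_two_mul, ← hJ.zero_zero_two_mul_sub_one, ← cos_two_mul,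
      hTerm_eq_pCoeff_mul]
    field_simp
  rw [integral_pKernel_arccos,
    integral_tsum_mul_eval_chebyshevU (summable_abs_pCoeff_mul r hn hJ ht) (abs_cos_le_one φ),
    tsum_prod_eq_tsum_two_mul fun m k ↦ by
      rw [integral_eval_chebyshevU_two_mul_add_one, mul_zero], ← tsum_mul_left]
  exact tsum_congr even_term

/-- the intertwining between the subelliptic heat kernel `h_t` on `CP^{2n+1}`
and the subelliptic heat kernel `p_t` of the quaternionic Hopf fibration on `S^{4n+3}`. -/
theorem stmt_15 (n : ℕ) (hn : 1 ≤ n) (J : ℕ → ℕ → ℕ → ℝ → ℝ) (hJ : IsJacobi J)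
    (t r φ : ℝ) (ht : 0 < t) (hr : r ∈ Set.Ico 0 (π / 2)) (hφ : φ ∈ Set.Ioc 0 (π / 2)) :
    hKernel n J t r φ =
      (1 / (2 * π)) *
        ∫ θ in (0:ℝ)..π, pKernel n J t r (Real.arccos (Real.cos φ * Real.cos θ)) := by
  exact stmt_15_general n hn J hJ t r φ ht
end
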